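/- arXiv:1706.04935 — 2 statements merged into one kernel-verified Lean document; each statement's English description precedes it below -/
import Mathlib

section
/- Let α be a composition, l = max{i : α_i ≠ 0}, and n = max{l, α_1, ..., α_l}. Then the Newton polytope of the key polynomial κ_α equals the Minkowski sum of Schubert matroid polytopes Σ_{j=1}^n P(SM_n(D(α)_j)), where D(α)_j = {i ≤ n : α_i ≥ j} are the columns of the skyline diagram of α. -/
open Finset MvPolynomial Pointwise

/-- `DomLE R S`: `R` and `S` have the same cardinality and, for each `k`, the `k`-th least
element of `R` does not exceed the `k`-th least element of `S`.  The bases of the Schubert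
matroid `SM_n(S)` are exactly the `B` with `DomLE B S`. -/
def DomLE {α : Type*} [LinearOrder α] (R S : Finset α) : Prop :=
  R.card = S.card ∧
    ∀ (k : ℕ) (hR : k < (R.sort (· ≤ ·)).length) (hS : k < (S.sort (· ≤ ·)).length),
      (R.sort (· ≤ ·)).get ⟨k, hR⟩ ≤ (S.sort (· ≤ ·)).get ⟨k, hS⟩

/-- Indicator vector of a finite subset of `ℕ`. -/
def indVecNat (B : Finset ℕ) : ℕ → ℝ := fun i => if i ∈ B then 1 else 0

/-- Matroid polytope `P(SM_n(S))` of the Schubert matroid on ground set `{0, …, n-1} ⊆ ℕ`: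
the convex hull of the indicator vectors of the bases, the `B ⊆ {0, …, n-1}` with `B ≤ S`. -/
def smPolytopeNat (n : ℕ) (S : Finset ℕ) : Set (ℕ → ℝ) :=
  convexHull ℝ
    {x | ∃ B : Finset ℕ, B ⊆ Finset.range n ∧ DomLE B S ∧ x = indVecNat B}

/-- The Newton polytope of a polynomial in the variables `x_1, x_2, …`. -/
def newtonPolytopeNat (f : MvPolynomial ℕ ℤ) : Set (ℕ → ℝ) :=
  convexHull ℝ ((fun (d : ℕ →₀ ℕ) (i : ℕ) => ((d i : ℕ) : ℝ)) '' ↑f.support)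

/-
A point of the Minkowski sum of the polytopes `P(SM(D(α)_j))` given by bases `B_j ≤ D(α)_j` comes
from a skyline diagram as soon as the `B_j` are nested. If `B_j ⊄ B_i` for some `i < j`, a symmetric
exchange between `B_i` and `B_j` displays the point as the midpoint of two others, so every vertex
comes from a composition `β` with `D(β) ≤ D(α)` columnwise: the Minkowski sum is the convex hull of
these `β`.

This hull is the Newton polytope of `κ_α` by induction on the sorting of `α`. A monomial created by
the Demazure operator lies on the segment between a monomial of `κ_α̂` and its mirror image, and
mirroring maps compositions below `α̂` to compositions below `α`; this bounds the Newton polytope.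
Conversely all `β` below `α` have the same Euclidean norm as `α`, which no exponent of `κ_α̂`
exceeds, so the coefficient of `x^β` in `κ_α` receives a single contribution, the coefficient in
`κ_α̂` of `β` sorted at the two positions, and never vanishes.
-/

section DomLE

variable {B B' D D' : Finset ℕ} {a b n p q : ℕ}

theorem count_mem_eq_card_filter_lt (B : Finset ℕ) (m : ℕ) :
    Nat.count (· ∈ B) m = #{x ∈ B | x < m} := by
  rw [Nat.count_eq_card_filter_range]
  congr 1
  ext x
  simp only [mem_filter, mem_range, and_comm]

theorem count_mem_le_card (B : Finset ℕ) (m : ℕ) : Nat.count (· ∈ B) m ≤ #B :=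
  (count_mem_eq_card_filter_lt B m).trans_le (card_filter_le _ _)

theorem count_mem_eq_card_iff : Nat.count (· ∈ B) n = #B ↔ B ⊆ range n := by
  rw [count_mem_eq_card_filter_lt, card_filter_eq_iff]
  simp only [subset_iff, mem_range]

theorem count_mem_add_card_inter_Ico (B : Finset ℕ) (hpq : p ≤ q) :
    Nat.count (· ∈ B) p + #(B ∩ Ico p q) = Nat.count (· ∈ B) q := by
  rw [count_mem_eq_card_filter_lt, count_mem_eq_card_filter_lt,
    ← card_union_of_disjoint (disjoint_left.2 fun x hx hx' => by
      simp only [mem_filter, mem_inter, mem_Ico] at hx hx'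
      omega)]
  congr 1
  ext x
  simp only [mem_union, mem_filter, mem_inter, mem_Ico]
  grind

theorem sort_get_lt_iff_lt_count (B : Finset ℕ) {k : ℕ} (hk : k < (B.sort (· ≤ ·)).length)
    (m : ℕ) :
    (B.sort (· ≤ ·)).get ⟨k, hk⟩ < m ↔ k < Nat.count (· ∈ B) m := by
  have toFinset_eq (hf : (Set.ofPred (· ∈ B)).Finite) : hf.toFinset = B := by ext; simp
  have get_eq_nth : (B.sort (· ≤ ·)).get ⟨k, hk⟩ = Nat.nth (· ∈ B) k := by
    rw [Nat.nth_eq_getD_sort (p := (· ∈ B)) B.finite_toSet, toFinset_eq,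
      List.getD_eq_getElem _ _ hk, List.get_eq_getElem]
  have count_nth : Nat.count (· ∈ B) (Nat.nth (· ∈ B) k) = k :=
    Nat.count_nth fun hf => by rwa [toFinset_eq, ← length_sort (· ≤ ·)]
  rw [get_eq_nth]
  refine ⟨fun h => ?_, Nat.nth_lt_of_lt_count⟩
  have nth_mem : Nat.nth (· ∈ B) k ∈ B :=
    Nat.nth_mem k fun hf => by rwa [toFinset_eq, ← length_sort (· ≤ ·)]
  exact count_nth.symm.trans_lt (Nat.count_strict_mono nth_mem h)

theorem domLE_iff_count_le :
    DomLE B D ↔ #B = #D ∧ ∀ m, Nat.count (· ∈ D) m ≤ Nat.count (· ∈ B) m := by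
  refine and_congr_right fun hcard => ⟨fun h m => ?_, fun h k hB hD => ?_⟩
  · by_contra! hlt
    have hD : Nat.count (· ∈ B) m < (D.sort (· ≤ ·)).length := by
      rw [length_sort]
      exact hlt.trans_le (count_mem_le_card D m)
    have hB : Nat.count (· ∈ B) m < (B.sort (· ≤ ·)).length := by
      rwa [length_sort, hcard, ← length_sort (· ≤ ·)]
    exact lt_irrefl _ ((sort_get_lt_iff_lt_count B hB m).1
      ((h _ hB hD).trans_lt ((sort_get_lt_iff_lt_count D hD m).2 hlt)))
  · rw [← Nat.lt_succ_iff, sort_get_lt_iff_lt_count]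
    exact ((sort_get_lt_iff_lt_count D hD _).1 (Nat.lt_succ_self _)).trans_le (h _)

theorem DomLE.refl (B : Finset ℕ) : DomLE B B :=
  domLE_iff_count_le.2 ⟨rfl, fun _ => le_rfl⟩

theorem DomLE.trans {C : Finset ℕ} (hBC : DomLE B C) (hCD : DomLE C D) : DomLE B D := by
  rw [domLE_iff_count_le] at *
  exact ⟨hBC.1.trans hCD.1, fun m => (hCD.2 m).trans (hBC.2 m)⟩

theorem DomLE.subset_range (h : DomLE B D) (hD : D ⊆ range n) : B ⊆ range n := by
  obtain ⟨hcard, hcount⟩ := domLE_iff_count_le.1 h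
  rw [← count_mem_eq_card_iff] at *
  exact (count_mem_le_card B n).antisymm (by rw [hcard, ← hD]; exact hcount n)

theorem DomLE.eq_of_isLowerSet (h : DomLE B D) (hD : IsLowerSet (D : Set ℕ)) : B = D := by
  refine eq_of_subset_of_card_le (fun x hx => ?_) h.1.ge
  by_contra hxD
  have hDx : D ⊆ range x := fun y hy => mem_range.2 <| by
    by_contra! hxy
    exact hxD (hD hxy hy)
  exact notMem_range_self (h.subset_range hDx hx)

theorem count_mem_insert_erase (ha : a ∉ B) (hb : b ∈ B) (m : ℕ) :
    Nat.count (· ∈ insert a (B.erase b)) m + (if b < m then 1 else 0) =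
      Nat.count (· ∈ B) m + if a < m then 1 else 0 := by
  have hab : a ≠ b := fun h => ha (h ▸ hb)
  induction m with
  | zero => simp
  | succ m ih =>
    rw [Nat.count_succ, Nat.count_succ]
    grind

theorem DomLE.insert_erase (h : DomLE B D) (ha : a ∉ B) (hb : b ∈ B)
    (hlt : ∀ m, b < m → m ≤ a → Nat.count (· ∈ D) m < Nat.count (· ∈ B) m) :
    DomLE (insert a (B.erase b)) D := by
  obtain ⟨hcard, hcount⟩ := domLE_iff_count_le.1 h
  refine domLE_iff_count_le.2 ⟨?_, fun m => ?_⟩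
  · rw [card_insert_of_notMem (fun h => ha (mem_of_mem_erase h)), card_erase_add_one hb, hcard]
  · have hswap := count_mem_insert_erase ha hb m
    have := hcount m
    have := hlt m
    split_ifs at hswap <;> omega

theorem DomLE.exists_last_count_eq (h : DomLE B D) (a : ℕ) :
    ∃ p ≤ a, Nat.count (· ∈ D) p = Nat.count (· ∈ B) p ∧
      ∀ m, p < m → m ≤ a → Nat.count (· ∈ D) m < Nat.count (· ∈ B) m := by
  have hle := (domLE_iff_count_le.1 h).2
  let P (m : ℕ) : Prop := Nat.count (· ∈ D) m = Nat.count (· ∈ B) m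
  refine ⟨Nat.findGreatest P a, Nat.findGreatest_le a,
    Nat.findGreatest_spec (P := P) (Nat.zero_le a) ?_, fun m hpm hma => ?_⟩
  · simp only [P, Nat.count_zero]
  · exact (hle m).lt_of_ne (Nat.findGreatest_is_greatest (P := P) hpm hma)

theorem DomLE.exists_first_count_eq (h : DomLE B D) (ha : a ∈ B) :
    ∃ q, a < q ∧ Nat.count (· ∈ D) q = Nat.count (· ∈ B) q ∧
      ∀ m, a < m → m < q → Nat.count (· ∈ D) m < Nat.count (· ∈ B) m := by
  have hle := (domLE_iff_count_le.1 h).2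
  have hex : ∃ m, a < m ∧ Nat.count (· ∈ D) m = Nat.count (· ∈ B) m := by
    obtain ⟨N, hN⟩ := exists_nat_subset_range D
    have hBN := h.subset_range hN
    refine ⟨N, mem_range.1 (hBN ha), ?_⟩
    rw [count_mem_eq_card_iff.2 hN, count_mem_eq_card_iff.2 hBN, h.1]
  refine ⟨Nat.find hex, (Nat.find_spec hex).1, (Nat.find_spec hex).2, fun m ham hmq => ?_⟩
  exact (hle m).lt_of_ne fun heq => Nat.find_min hex hmq ⟨ham, heq⟩

-- The witness is any element of `B \ B'` in the window `[p, q)` around `a` between the last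
-- `p ≤ a` at which `B` ties with `D` and the first `q > a` at which `B'` ties with `D'`.
theorem DomLE.exists_exchange (h : DomLE B D) (h' : DomLE B' D') (hD : D' ⊆ D)
    (ha' : a ∈ B') (ha : a ∉ B) :
    ∃ b ∈ B, b ∉ B' ∧ DomLE (insert a (B.erase b)) D ∧ DomLE (insert b (B'.erase a)) D' := by
  obtain ⟨p, hpa, hp, hp_lt⟩ := h.exists_last_count_eq a
  obtain ⟨q, haq, hq, hq_lt⟩ := h'.exists_first_count_eq ha'
  obtain ⟨b, hbB, hbB', hpb, hbq⟩ : ∃ b ∈ B, b ∉ B' ∧ p ≤ b ∧ b < q := by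
    by_contra! hsub
    have hssub : B ∩ Ico p q ⊂ B' ∩ Ico p q := by
      refine (ssubset_iff_of_subset fun x hx => ?_).2 ⟨a, by simp [ha', hpa, haq], by simp [ha]⟩
      simp only [mem_inter, mem_Ico] at hx ⊢
      exact ⟨by_contra fun hxB' => (hsub x hx.1 hxB' hx.2.1).not_gt hx.2.2, hx.2⟩
    have hwindow := card_lt_card hssub
    have hwindowD := card_le_card (inter_subset_inter_right hD : D' ∩ Ico p q ⊆ D ∩ Ico p q)
    have hsplit (S : Finset ℕ) := count_mem_add_card_inter_Ico S (hpa.trans haq.le)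
    have hle := (domLE_iff_count_le.1 h).2 q
    have hle' := (domLE_iff_count_le.1 h').2 p
    linarith [hsplit B, hsplit B', hsplit D, hsplit D']
  exact ⟨b, hbB, hbB', h.insert_erase ha hbB fun m hbm => hp_lt m (hpb.trans_lt hbm),
    h'.insert_erase hbB' ha' fun m ham hmb => hq_lt m ham (hmb.trans_lt hbq)⟩

end DomLE

section SchubertMatroidSum

/-- The vertex set `{1_B : B ≤ S}` of the Schubert matroid polytope of `S`, without a ground set:
`B ≤ S` already forces `B ⊆ [n]` when `S ⊆ [n]`. -/
def schubertVertices (S : Finset ℕ) : Set (ℕ → ℝ) :=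
  indVecNat '' {B | DomLE B S}

theorem smPolytopeNat_eq_convexHull_schubertVertices {n : ℕ} {S : Finset ℕ} (hS : S ⊆ range n) :
    smPolytopeNat n S = convexHull ℝ (schubertVertices S) := by
  unfold smPolytopeNat schubertVertices
  congr 1
  ext x
  constructor
  · rintro ⟨B, -, hBS, rfl⟩
    exact ⟨B, hBS, rfl⟩
  · rintro ⟨B, hBS, rfl⟩
    exact ⟨B, hBS.subset_range hS, hBS, rfl⟩

theorem finite_schubertVertices (S : Finset ℕ) : (schubertVertices S).Finite := by
  obtain ⟨n, hn⟩ := exists_nat_subset_range S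
  exact ((range n).powerset.finite_toSet.subset fun B (hB : DomLE B S) =>
    mem_coe.2 (mem_powerset.2 (hB.subset_range hn))).image indVecNat

theorem mem_sum_schubertVertices {ι : Type*} {J : Finset ι} {S : ι → Finset ℕ} {x : ℕ → ℝ} :
    x ∈ ∑ j ∈ J, schubertVertices (S j) ↔
      ∃ B : ι → Finset ℕ, (∀ j ∈ J, DomLE (B j) (S j)) ∧ ∑ j ∈ J, indVecNat (B j) = x := by
  rw [Set.mem_finsetSum]
  constructor
  · rintro ⟨g, hg, rfl⟩
    have hB (j : ι) : ∃ B, j ∈ J → DomLE B (S j) ∧ indVecNat B = g j := by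
      by_cases hj : j ∈ J
      · exact (hg hj).imp fun B hB _ => hB
      · exact ⟨∅, fun h => absurd h hj⟩
    choose B hB using hB
    exact ⟨B, fun j hj => (hB j hj).1, sum_congr rfl fun j hj => (hB j hj).2⟩
  · rintro ⟨B, hB, rfl⟩
    exact ⟨fun j => indVecNat (B j), fun hj => ⟨B _, hB _ hj, rfl⟩, rfl⟩

theorem indVecNat_insert_erase {B : Finset ℕ} {a b : ℕ} (ha : a ∉ B) (hb : b ∈ B) :
    indVecNat (insert a (B.erase b)) = indVecNat B + (Pi.single a 1 - Pi.single b 1) := by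
  ext k
  simp only [indVecNat, mem_insert, mem_erase, Pi.add_apply, Pi.sub_apply, Pi.single_apply]
  grind

theorem sum_update_eq_add_of_eq_add {ι M N : Type*} [DecidableEq ι] [AddCommMonoid N]
    {J : Finset ι} {j : ι} (hj : j ∈ J) (φ : M → N) (f : ι → M) {y : M} {v : N}
    (hy : φ y = φ (f j) + v) :
    ∑ i ∈ J, φ (Function.update f j y i) = ∑ i ∈ J, φ (f i) + v := by
  rw [sum_eq_add_sum_sdiff_singleton_of_mem hj, sum_eq_add_sum_sdiff_singleton_of_mem hj,
    Function.update_self, hy, add_right_comm]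
  congr 2
  refine sum_congr rfl fun i hi => ?_
  rw [Function.update_of_ne (by simpa using (mem_sdiff.1 hi).2)]

theorem eq_zero_of_mem_extremePoints {𝕜 E : Type*} [Field 𝕜] [LinearOrder 𝕜]
    [IsStrictOrderedRing 𝕜] [AddCommGroup E] [Module 𝕜 E] {A : Set E} {x v : E}
    (hx : x ∈ A.extremePoints 𝕜) (hadd : x + v ∈ A) (hsub : x - v ∈ A) : v = 0 := by
  have hmid : x ∈ openSegment 𝕜 (x + v) (x - v) :=
    ⟨1 / 2, 1 / 2, by norm_num, by norm_num, by norm_num, by module⟩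
  exact add_eq_left.1 (mem_extremePoints_iff_left.1 hx |>.2 _ hadd _ hsub hmid)

theorem subset_of_sum_mem_extremePoints {ι : Type*} {J : Finset ι}
    {S B : ι → Finset ℕ} (hB : ∀ j ∈ J, DomLE (B j) (S j))
    (hx : ∑ j ∈ J, indVecNat (B j) ∈
      (convexHull ℝ (∑ j ∈ J, schubertVertices (S j))).extremePoints ℝ)
    {i i' : ι} (hi : i ∈ J) (hi' : i' ∈ J) (hS : S i' ⊆ S i) : B i' ⊆ B i := by
  classical
  intro a ha'
  by_contra ha
  obtain ⟨b, hb, hb', hdom, hdom'⟩ := (hB i hi).exists_exchange (hB i' hi') hS ha' ha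
  have update_mem {j : ι} {C : Finset ℕ} (hC : DomLE C (S j)) :
      ∑ k ∈ J, indVecNat (Function.update B j C k) ∈
        convexHull ℝ (∑ j ∈ J, schubertVertices (S j)) := by
    refine subset_convexHull _ _ (mem_sum_schubertVertices.2 ⟨_, fun k hk => ?_, rfl⟩)
    rcases eq_or_ne k j with rfl | hkj
    · rwa [Function.update_self]
    · rw [Function.update_of_ne hkj]
      exact hB k hk
  have hadd := update_mem hdom
  have hsub := update_mem hdom'
  rw [sum_update_eq_add_of_eq_add hi _ _ (indVecNat_insert_erase ha hb)] at hadd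
  rw [sum_update_eq_add_of_eq_add hi' _ _ (indVecNat_insert_erase hb' ha'), ← neg_sub,
    ← sub_eq_add_neg] at hsub
  have hzero := congrFun (eq_zero_of_mem_extremePoints hx hadd hsub) a
  have hab : a ≠ b := fun h => ha (h ▸ hb)
  simp [hab] at hzero

end SchubertMatroidSum

section Skyline

variable {α β γ : ℕ →₀ ℕ} {n m : ℕ}

/-- The exponent vector of a monomial as a point of real space. -/
def expVec {σ : Type*} (d : σ →₀ ℕ) : σ → ℝ := fun i => (d i : ℝ)

/-- The columns of the skyline diagram of a composition; as everywhere, rows and columns are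
numbered from `0`. -/
def skylineColumn (α : ℕ →₀ ℕ) (j : ℕ) : Finset ℕ := {i ∈ α.support | j < α i}

/-- Columnwise comparison of skyline diagrams: every column of `D(β)` is a basis of the Schubert
matroid of the corresponding column of `D(α)`. -/
def SkylineLE (β α : ℕ →₀ ℕ) : Prop := ∀ j, DomLE (skylineColumn β j) (skylineColumn α j)

/-- The exponent vectors `β` with `D(β) ≤ D(α)` columnwise, as real points; their convex hull is the
Newton polytope of `κ_α`. -/
def skylineVertices (α : ℕ →₀ ℕ) : Set (ℕ → ℝ) := expVec '' {β | SkylineLE β α}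

@[simp]
theorem mem_skylineColumn {j k : ℕ} : k ∈ skylineColumn α j ↔ j < α k := by
  simp only [skylineColumn, mem_filter, Finsupp.mem_support_iff]
  omega

theorem skylineColumn_eq_empty {j : ℕ} (h : ∀ k, α k ≤ j) : skylineColumn α j = ∅ := by
  simpa [eq_empty_iff_forall_notMem] using h

theorem filter_range_eq_skylineColumn (hn : ∀ k, α k ≠ 0 → k < n) (j : ℕ) :
    {i ∈ range n | j + 1 ≤ α i} = skylineColumn α j := by
  ext k
  have := hn k
  simp only [mem_filter, mem_range, mem_skylineColumn]
  omega

theorem apply_le_sup_support (α : ℕ →₀ ℕ) (k : ℕ) : α k ≤ α.support.sup α := by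
  by_cases hk : k ∈ α.support
  · exact le_sup hk
  · simp only [Finsupp.notMem_support_iff.1 hk, Nat.zero_le]

theorem SkylineLE.refl (α : ℕ →₀ ℕ) : SkylineLE α α := fun _ => DomLE.refl _

theorem SkylineLE.trans (hγβ : SkylineLE γ β) (hβα : SkylineLE β α) : SkylineLE γ α :=
  fun j => (hγβ j).trans (hβα j)

theorem SkylineLE.le_of_le (h : SkylineLE β α) (hm : ∀ k, α k ≤ m) (k : ℕ) : β k ≤ m := by
  have hcard := (h m).1
  rw [skylineColumn_eq_empty hm, card_empty, card_eq_zero] at hcard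
  by_contra! hk
  exact notMem_empty k (hcard ▸ mem_skylineColumn.2 hk)

theorem SkylineLE.eq_of_antitone (h : SkylineLE β α) (hα : Antitone α) : β = α := by
  have hcol (j : ℕ) : skylineColumn β j = skylineColumn α j :=
    (h j).eq_of_isLowerSet fun k l hlk hk => by
      simp only [mem_coe, mem_skylineColumn] at hk ⊢
      exact hk.trans_le (hα hlk)
  ext k
  refine eq_of_forall_lt_iff fun j => ?_
  rw [← mem_skylineColumn, ← mem_skylineColumn, hcol]

theorem expVec_eq_sum_indVecNat (hm : ∀ k, α k ≤ m) :
    expVec α = ∑ j ∈ range m, indVecNat (skylineColumn α j) := by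
  ext k
  have hrange : {j ∈ range m | j < α k} = range (α k) := by
    ext j
    have := hm k
    simp only [mem_filter, mem_range]
    omega
  simp only [expVec, Finset.sum_apply, indVecNat, mem_skylineColumn, sum_boole, hrange, card_range]

theorem lt_count_iff_of_antitone {P : ℕ → Prop} [DecidablePred P] {j : ℕ} (hj : j < m)
    (hP : ∀ i j, i ≤ j → j < m → P j → P i) : j < Nat.count P m ↔ P j := by
  constructor
  · intro hlt
    by_contra hPj
    have htail : Nat.count (fun k => P (j + k)) (m - j) = 0 :=
      Nat.count_iff_forall_not.2 fun k hk hPk => hPj (hP _ _ (Nat.le_add_right j k) (by omega) hPk)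
    have hsplit := Nat.count_add P j (m - j)
    rw [htail, Nat.add_sub_cancel' hj.le] at hsplit
    exact (hsplit.trans_le (Nat.count_le P)).not_gt hlt
  · intro hPj
    calc j < j + 1 := Nat.lt_succ_self j
      _ = Nat.count P (j + 1) := (Nat.count_iff_forall.2 fun k hk =>
          hP k j (Nat.le_of_lt_succ hk) hj hPj).symm
      _ ≤ Nat.count P m := Nat.count_monotone P hj

theorem exists_skylineColumn_eq {B : ℕ → Finset ℕ}
    (hB : ∀ i j, i ≤ j → j < m → B j ⊆ B i) :
    ∃ β : ℕ →₀ ℕ, (∀ j < m, skylineColumn β j = B j) ∧ ∀ k, β k ≤ m := by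
  refine ⟨Finsupp.onFinset ((range m).biUnion B) (fun k => Nat.count (k ∈ B ·) m) fun k hk => ?_,
    fun j hj => ?_, fun k => Nat.count_le _⟩
  · obtain ⟨j, hj, hkj⟩ := Nat.count_ne_iff_exists.1 hk
    exact mem_biUnion.2 ⟨j, mem_range.2 hj, hkj⟩
  · ext k
    rw [mem_skylineColumn, Finsupp.onFinset_apply]
    exact lt_count_iff_of_antitone hj fun i j hij hj hk => hB i j hij hj hk

theorem SkylineLE.expVec_mem_sum (h : SkylineLE β α) (hm : ∀ k, α k ≤ m) :
    expVec β ∈ ∑ j ∈ range m, schubertVertices (skylineColumn α j) :=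
  mem_sum_schubertVertices.2
    ⟨skylineColumn β, fun j _ => h j, (expVec_eq_sum_indVecNat (h.le_of_le hm)).symm⟩

theorem exists_skylineLE_of_mem_extremePoints (hm : ∀ k, α k ≤ m) {x : ℕ → ℝ}
    (hx : x ∈ (convexHull ℝ
      (∑ j ∈ range m, schubertVertices (skylineColumn α j))).extremePoints ℝ) :
    ∃ β, SkylineLE β α ∧ expVec β = x := by
  obtain ⟨B, hB, rfl⟩ := mem_sum_schubertVertices.1 (extremePoints_convexHull_subset hx)
  have nested (i j : ℕ) (hij : i ≤ j) (hj : j < m) : B j ⊆ B i :=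
    subset_of_sum_mem_extremePoints hB hx (mem_range.2 (hij.trans_lt hj)) (mem_range.2 hj)
      fun k hk => mem_skylineColumn.2 (hij.trans_lt (mem_skylineColumn.1 hk))
  obtain ⟨β, hβ, hβm⟩ := exists_skylineColumn_eq nested
  refine ⟨β, fun j => ?_, ?_⟩
  · rcases lt_or_ge j m with hj | hj
    · rw [hβ j hj]
      exact hB j (mem_range.2 hj)
    · rw [skylineColumn_eq_empty fun k => (hm k).trans hj,
        skylineColumn_eq_empty fun k => (hβm k).trans hj]
      exact DomLE.refl ∅
  · rw [expVec_eq_sum_indVecNat hβm]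
    exact sum_congr rfl fun j hj => by rw [hβ j (mem_range.1 hj)]

theorem convexHull_skylineVertices (hm : ∀ k, α k ≤ m) :
    convexHull ℝ (skylineVertices α) =
      ∑ j ∈ range m, convexHull ℝ (schubertVertices (skylineColumn α j)) := by
  rw [← convexHull_sum]
  have hsub : skylineVertices α ⊆
      ∑ j ∈ range m, schubertVertices (skylineColumn α j) :=
    Set.image_subset_iff.2 fun β hβ => hβ.expVec_mem_sum hm
  have hfin : (∑ j ∈ range m, schubertVertices (skylineColumn α j)).Finite :=
    sum_induction _ Set.Finite (fun _ _ => Set.Finite.add) (Set.finite_singleton 0)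
      fun j _ => finite_schubertVertices _
  refine (convexHull_mono hsub).antisymm ?_
  rw [← closure_convexHull_extremePoints (hfin.isCompact_convexHull ℝ) (convex_convexHull ℝ _)]
  exact closure_minimal
    (convexHull_mono fun x hx => exists_skylineLE_of_mem_extremePoints hm hx)
    ((hfin.subset hsub).isClosed_convexHull ℝ)

end Skyline

section UpdatePair

variable {σ : Type*} {i j : σ} {a : σ →₀ ℕ} {k l p q : ℕ}

/-- The exponent vector `a` with its entries at `i` and `j` replaced by `p` and `q`; for `i ≠ j` the
vectors with fixed `p + q` form a string for the Demazure operator at `i, j`. -/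
noncomputable def updatePair (i j : σ) (a : σ →₀ ℕ) (p q : ℕ) : σ →₀ ℕ :=
  (a.update i p).update j q

/-- The composition `a` with its entries at `i` and `j` put in weakly decreasing order. -/
noncomputable def sortPair (i j : σ) (a : σ →₀ ℕ) : σ →₀ ℕ :=
  updatePair i j a (max (a i) (a j)) (min (a i) (a j))

theorem updatePair_apply_left (hij : i ≠ j) : updatePair i j a p q i = p := by
  classical
  simp [updatePair, Finsupp.update_apply, hij]

theorem updatePair_apply_right : updatePair i j a p q j = q := by
  classical
  simp [updatePair, Finsupp.update_apply]

theorem updatePair_apply_of_ne {x : σ} (hi : x ≠ i) (hj : x ≠ j) :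
    updatePair i j a p q x = a x := by
  classical
  simp [updatePair, Finsupp.update_apply, hi, hj]

theorem updatePair_eq_iff (hij : i ≠ j) {b : σ →₀ ℕ} (hb : ∀ x, x ≠ i → x ≠ j → b x = a x) :
    updatePair i j a p q = b ↔ p = b i ∧ q = b j := by
  constructor
  · rintro rfl
    exact ⟨(updatePair_apply_left hij).symm, updatePair_apply_right.symm⟩
  · rintro ⟨rfl, rfl⟩
    ext x
    by_cases hi : x = i
    · rw [hi, updatePair_apply_left hij]
    · by_cases hj : x = j
      · rw [hj, updatePair_apply_right]
      · rw [updatePair_apply_of_ne hi hj, hb x hi hj]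

theorem updatePair_self (hij : i ≠ j) : updatePair i j a (a i) (a j) = a :=
  (updatePair_eq_iff hij fun _ _ _ => rfl).2 ⟨rfl, rfl⟩

theorem updatePair_updatePair (hij : i ≠ j) :
    updatePair i j (updatePair i j a k l) p q = updatePair i j a p q :=
  (updatePair_eq_iff hij fun x hi hj => by
    rw [updatePair_apply_of_ne hi hj, updatePair_apply_of_ne hi hj]).2
    ⟨(updatePair_apply_left hij).symm, updatePair_apply_right.symm⟩

theorem equivMapDomain_swap_updatePair [DecidableEq σ] (hij : i ≠ j) :
    Finsupp.equivMapDomain (Equiv.swap i j) (updatePair i j a p q) = updatePair i j a q p := by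
  refine ((updatePair_eq_iff hij fun x hi hj => ?_).2 ?_).symm
  · simp only [Finsupp.equivMapDomain_apply, Equiv.symm_swap, Equiv.swap_apply_of_ne_of_ne hi hj,
      updatePair_apply_of_ne hi hj]
  · simp only [Finsupp.equivMapDomain_apply, Equiv.symm_swap, Equiv.swap_apply_left,
      Equiv.swap_apply_right, updatePair_apply_left hij, updatePair_apply_right, and_self]

theorem equivMapDomain_swap [DecidableEq σ] (hij : i ≠ j) :
    Finsupp.equivMapDomain (Equiv.swap i j) a = updatePair i j a (a j) (a i) := by
  conv_lhs => rw [← updatePair_self (a := a) hij]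
  exact equivMapDomain_swap_updatePair hij

theorem sortPair_eq_equivMapDomain_swap [DecidableEq σ] (hij : i ≠ j) (h : a i ≤ a j) :
    sortPair i j a = Finsupp.equivMapDomain (Equiv.swap i j) a := by
  rw [sortPair, max_eq_right h, min_eq_left h, equivMapDomain_swap hij]

theorem sortPair_updatePair (hij : i ≠ j) :
    sortPair i j (updatePair i j a p q) = updatePair i j a (max p q) (min p q) := by
  rw [sortPair, updatePair_apply_left hij, updatePair_apply_right, updatePair_updatePair hij]

theorem single_add_updatePair_left (hij : i ≠ j) :
    Finsupp.single i 1 + updatePair i j a p q = updatePair i j a (p + 1) q := by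
  refine ((updatePair_eq_iff hij fun x hi hj => ?_).2 ?_).symm
  · simp [updatePair_apply_of_ne hi hj, hi.symm]
  · simp [updatePair_apply_left hij, updatePair_apply_right, hij, add_comm]

theorem single_add_updatePair_right (hij : i ≠ j) :
    Finsupp.single j 1 + updatePair i j a p q = updatePair i j a p (q + 1) := by
  refine ((updatePair_eq_iff hij fun x hi hj => ?_).2 ?_).symm
  · simp [updatePair_apply_of_ne hi hj, hj.symm]
  · simp [updatePair_apply_left hij, updatePair_apply_right, hij.symm, add_comm]

theorem sum_updatePair_add {N : Type*} [AddCommMonoid N] (hij : i ≠ j) (φ : σ → ℕ → N)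
    (hφ : ∀ x, φ x 0 = 0) :
    (updatePair i j a p q).sum φ + (φ i (a i) + φ j (a j)) = a.sum φ + (φ i p + φ j q) := by
  classical
  have split (b : σ →₀ ℕ) : b.sum φ = φ i (b i) + (φ j (b j) + ((b.erase i).erase j).sum φ) := by
    rw [← Finsupp.add_sum_erase' b i φ hφ, ← Finsupp.add_sum_erase' (b.erase i) j φ hφ,
      Finsupp.erase_ne hij.symm]
  have erase_eq : ((updatePair i j a p q).erase i).erase j = (a.erase i).erase j := by
    ext x
    by_cases hi : x = i
    · simp [hi, Finsupp.erase_apply]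
    · by_cases hj : x = j
      · simp [hj]
      · simp [hi, hj, updatePair_apply_of_ne hi hj]
  rw [split, split a, erase_eq, updatePair_apply_left hij, updatePair_apply_right]
  abel

theorem expVec_mem_segment_updatePair (hij : i ≠ j)
    (hsum : p + q = a i + a j) (hmax : max (a i) (a j) ≤ max p q) :
    expVec a ∈ segment ℝ (expVec (updatePair i j a p q)) (expVec (updatePair i j a q p)) := by
  have hmem : (a i : ℝ) ∈ segment ℝ (p : ℝ) q := by
    rw [segment_eq_uIcc, Set.mem_uIcc]
    exact_mod_cast (by omega : p ≤ a i ∧ a i ≤ q ∨ q ≤ a i ∧ a i ≤ p)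
  obtain ⟨s, t, hs, ht, hst, hdi⟩ := hmem
  have hdj : s * q + t * p = (a j : ℝ) := by
    have : (p + q : ℝ) = a i + a j := mod_cast hsum
    simp only [smul_eq_mul] at hdi
    linear_combination (p + q : ℝ) * hst - hdi + this
  refine ⟨s, t, hs, ht, hst, funext fun x => ?_⟩
  simp only [expVec, Pi.add_apply, Pi.smul_apply, smul_eq_mul] at hdi ⊢
  by_cases hxi : x = i
  · rw [hxi, updatePair_apply_left hij, updatePair_apply_left hij, hdi]
  · by_cases hxj : x = j
    · rw [hxj, updatePair_apply_right, updatePair_apply_right, hdj]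
    · rw [updatePair_apply_of_ne hxi hxj, updatePair_apply_of_ne hxi hxj, ← add_mul, hst, one_mul]

end UpdatePair

section Demazure

theorem eq_sum_Ico_sub_sum_range {M : Type*} [AddCommGroup M] {F G : ℕ → ℕ → M}
    (hzero : ∀ l, G 0 l = F l 0)
    (hsucc : ∀ k l, G (k + 1) l + F k (l + 1) = G k (l + 1) + F l (k + 1)) (k l : ℕ) :
    G k l = ∑ p ∈ Ico k (k + l + 1), F p (k + l - p) - ∑ p ∈ range l, F p (k + l - p) := by
  induction k generalizing l with
  | zero => simp [hzero, sum_range_succ]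
  | succ k ih =>
    rw [eq_sub_of_add_eq (hsucc k l), ih, sum_eq_sum_Ico_succ_bot (by omega), sum_range_succ,
      show k + (l + 1) - k = l + 1 by omega, show k + (l + 1) - l = k + 1 by omega,
      show k + 1 + l = k + (l + 1) by omega]
    abel

theorem eq_sum_Ico_max_sub_sum_range_min {M : Type*} [AddCommGroup M] {F G : ℕ → ℕ → M}
    (hzero : ∀ l, G 0 l = F l 0)
    (hsucc : ∀ k l, G (k + 1) l + F k (l + 1) = G k (l + 1) + F l (k + 1)) (k l : ℕ) :
    G k l = ∑ p ∈ Ico (max k l) (k + l + 1), F p (k + l - p) -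
      ∑ p ∈ range (min k l), F p (k + l - p) := by
  rw [eq_sum_Ico_sub_sum_range hzero hsucc]
  rcases le_total l k with h | h
  · rw [max_eq_left h, min_eq_right h]
  · rw [max_eq_right h, min_eq_left h, ← sum_Ico_consecutive _ h (by omega : l ≤ k + l + 1),
      ← sum_range_add_sum_Ico _ h]
    abel

variable {σ R : Type*} [CommRing R] {i j : σ} {f g : MvPolynomial σ R}
  {d : σ →₀ ℕ}

theorem coeff_updatePair_succ_left_X_mul (hij : i ≠ j) (p q : ℕ) :
    coeff (updatePair i j d (p + 1) q) (X i * f) = coeff (updatePair i j d p q) f := by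
  rw [← single_add_updatePair_left hij, coeff_X_mul]

theorem coeff_updatePair_succ_right_X_mul (hij : i ≠ j) (p q : ℕ) :
    coeff (updatePair i j d p (q + 1)) (X j * f) = coeff (updatePair i j d p q) f := by
  rw [← single_add_updatePair_right hij, coeff_X_mul]

theorem coeff_updatePair_zero_left_X_mul (hij : i ≠ j) (q : ℕ) :
    coeff (updatePair i j d 0 q) (X i * f) = 0 := by
  classical
  rw [coeff_X_mul', if_neg]
  simpa using updatePair_apply_left hij

variable [DecidableEq σ]

/-- `g` is the Demazure operator at `i, j` applied to `f`, that is `g = ∂ (X i * f)` for the divided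
difference `∂` at `i, j`; stated with the denominator `X i - X j` cleared. -/
def IsDemazure (i j : σ) (f g : MvPolynomial σ R) : Prop :=
  (X i - X j) * g = X i * f - rename (Equiv.swap i j) (X i * f)

theorem coeff_updatePair_rename_swap (hij : i ≠ j) (p q : ℕ) :
    coeff (updatePair i j d p q) (rename (Equiv.swap i j) f) = coeff (updatePair i j d q p) f := by
  rw [← equivMapDomain_swap_updatePair hij, Finsupp.equivMapDomain_eq_mapDomain,
    coeff_rename_mapDomain _ (Equiv.injective _)]

namespace IsDemazure

theorem coeff_updatePair_zero (h : IsDemazure i j f g) (hij : i ≠ j) (l : ℕ) :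
    coeff (updatePair i j d 0 l) g = coeff (updatePair i j d l 0) f := by
  have hcoeff := congrArg (coeff (updatePair i j d 0 (l + 1))) h
  rw [sub_mul, coeff_sub, coeff_sub, coeff_updatePair_rename_swap hij,
    coeff_updatePair_zero_left_X_mul hij, coeff_updatePair_zero_left_X_mul hij,
    coeff_updatePair_succ_right_X_mul hij, coeff_updatePair_succ_left_X_mul hij] at hcoeff
  simpa using hcoeff

theorem coeff_updatePair_succ (h : IsDemazure i j f g) (hij : i ≠ j) (k l : ℕ) :
    coeff (updatePair i j d (k + 1) l) g + coeff (updatePair i j d k (l + 1)) f =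
      coeff (updatePair i j d k (l + 1)) g + coeff (updatePair i j d l (k + 1)) f := by
  have hcoeff := congrArg (coeff (updatePair i j d (k + 1) (l + 1))) h
  rw [sub_mul, coeff_sub, coeff_sub, coeff_updatePair_rename_swap hij,
    coeff_updatePair_succ_left_X_mul hij, coeff_updatePair_succ_right_X_mul hij,
    coeff_updatePair_succ_left_X_mul hij, coeff_updatePair_succ_left_X_mul hij] at hcoeff
  linear_combination -hcoeff

-- With `∂` as in `IsDemazure`, `∂ (X i * X i ^ p * X j ^ q)` is the sum of the monomials on the
-- string from `X i ^ p * X j ^ q` to its mirror image if `q ≤ p`, and minus the sum of those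
-- strictly between the two if `p < q`.
theorem coeff_eq_sum (h : IsDemazure i j f g) (hij : i ≠ j) (d : σ →₀ ℕ) :
    coeff d g =
      ∑ p ∈ Ico (max (d i) (d j)) (d i + d j + 1),
          coeff (updatePair i j d p (d i + d j - p)) f -
        ∑ p ∈ range (min (d i) (d j)), coeff (updatePair i j d p (d i + d j - p)) f := by
  conv_lhs => rw [← updatePair_self (a := d) hij]
  exact eq_sum_Ico_max_sub_sum_range_min
    (F := fun p q => coeff (updatePair i j d p q) f)
    (G := fun p q => coeff (updatePair i j d p q) g) (h.coeff_updatePair_zero hij)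
    (h.coeff_updatePair_succ hij) (d i) (d j)

theorem exists_coeff_updatePair_ne_zero (h : IsDemazure i j f g) (hij : i ≠ j)
    (hd : coeff d g ≠ 0) :
    ∃ p q, p + q = d i + d j ∧ max (d i) (d j) ≤ max p q ∧ coeff (updatePair i j d p q) f ≠ 0 := by
  contrapose! hd
  rw [h.coeff_eq_sum hij, sum_eq_zero, sum_eq_zero, sub_zero]
  · intro p hp
    rw [mem_range] at hp
    exact hd p _ (by omega) (by omega)
  · intro p hp
    rw [mem_Ico] at hp
    exact hd p _ (by omega) (by omega)

theorem coeff_eq_coeff_sortPair (h : IsDemazure i j f g) (hij : i ≠ j)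
    (hd : ∀ p q, p + q = d i + d j → max (d i) (d j) < max p q →
      coeff (updatePair i j d p q) f = 0) :
    coeff d g = coeff (sortPair i j d) f := by
  rw [h.coeff_eq_sum hij, sum_eq_sum_Ico_succ_bot (by omega), sum_eq_zero, sum_eq_zero, sub_zero,
    add_zero, sortPair, show d i + d j - max (d i) (d j) = min (d i) (d j) by omega]
  · intro p hp
    rw [mem_range] at hp
    exact hd p _ (by omega) (by omega)
  · intro p hp
    rw [mem_Ico] at hp
    exact hd p _ (by omega) (by omega)

end IsDemazure

end Demazure

section SqNorm

variable {σ : Type*} {i j : σ} {a : σ →₀ ℕ} {k l p q : ℕ}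

/-- The squared Euclidean norm of an exponent vector. It is constant on the skylines below a
composition and drops strictly towards the interior of a string. -/
def sqNorm (a : σ →₀ ℕ) : ℕ := a.sum fun _ m => m ^ 2

theorem sq_add_sq_le_of_max_le (hsum : p + q = k + l) (hmax : max k l ≤ max p q) :
    k ^ 2 + l ^ 2 ≤ p ^ 2 + q ^ 2 := by
  rcases le_total k l with hkl | hkl <;> rcases le_total p q with hpq | hpq <;>
    simp only [hkl, hpq, max_eq_left, max_eq_right] at hmax <;> nlinarith

theorem sq_add_sq_lt_of_max_lt (hsum : p + q = k + l) (hmax : max k l < max p q) :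
    k ^ 2 + l ^ 2 < p ^ 2 + q ^ 2 := by
  rcases le_total k l with hkl | hkl <;> rcases le_total p q with hpq | hpq <;>
    simp only [hkl, hpq, max_eq_left, max_eq_right] at hmax <;> nlinarith

theorem sqNorm_updatePair_add (hij : i ≠ j) :
    sqNorm (updatePair i j a p q) + (a i ^ 2 + a j ^ 2) = sqNorm a + (p ^ 2 + q ^ 2) :=
  sum_updatePair_add hij (fun _ m => m ^ 2) fun _ => zero_pow two_ne_zero

theorem sqNorm_le_sqNorm_updatePair (hij : i ≠ j) (hsum : p + q = a i + a j)
    (hmax : max (a i) (a j) ≤ max p q) : sqNorm a ≤ sqNorm (updatePair i j a p q) := by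
  have := sqNorm_updatePair_add (a := a) (p := p) (q := q) hij
  have := sq_add_sq_le_of_max_le hsum hmax
  omega

theorem sqNorm_lt_sqNorm_updatePair (hij : i ≠ j) (hsum : p + q = a i + a j)
    (hmax : max (a i) (a j) < max p q) : sqNorm a < sqNorm (updatePair i j a p q) := by
  have := sqNorm_updatePair_add (a := a) (p := p) (q := q) hij
  have := sq_add_sq_lt_of_max_lt hsum hmax
  omega

theorem sum_range_two_mul_add_one (b : ℕ) : ∑ t ∈ range b, (2 * t + 1) = b ^ 2 := by
  induction b with
  | zero => rfl
  | succ b ih =>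
    rw [sum_range_succ, ih]
    ring

theorem sqNorm_eq_sum_card_skylineColumn {α : ℕ →₀ ℕ} {m : ℕ} (hm : ∀ k, α k ≤ m) :
    sqNorm α = ∑ t ∈ range m, #(skylineColumn α t) * (2 * t + 1) := by
  simp only [sqNorm, Finsupp.sum, ← sum_range_two_mul_add_one]
  rw [sum_comm' (t' := range m) (s' := skylineColumn α)]
  · simp only [sum_const, smul_eq_mul]
  · intro k t
    have := hm k
    simp only [Finsupp.mem_support_iff, mem_range, mem_skylineColumn]
    omega

theorem SkylineLE.sqNorm_eq {α β : ℕ →₀ ℕ} (h : SkylineLE β α) : sqNorm β = sqNorm α := by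
  have hm := apply_le_sup_support α
  rw [sqNorm_eq_sum_card_skylineColumn hm, sqNorm_eq_sum_card_skylineColumn (h.le_of_le hm)]
  exact sum_congr rfl fun t _ => by rw [(h t).1]

end SqNorm

section SortPair

variable {α β : ℕ →₀ ℕ} {i : ℕ}

theorem count_skylineColumn_sortPair (β : ℕ →₀ ℕ) (i j m : ℕ) :
    Nat.count (· ∈ skylineColumn (sortPair i (i + 1) β) j) m =
      Nat.count (· ∈ skylineColumn β j) m +
        if m = i + 1 ∧ β i ≤ j ∧ j < β (i + 1) then 1 else 0 := by
  have hleft : sortPair i (i + 1) β i = max (β i) (β (i + 1)) :=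
    updatePair_apply_left i.succ_ne_self.symm
  have hright : sortPair i (i + 1) β (i + 1) = min (β i) (β (i + 1)) := updatePair_apply_right
  have hother (x : ℕ) : x ≠ i → x ≠ i + 1 → sortPair i (i + 1) β x = β x := updatePair_apply_of_ne
  simp only [mem_skylineColumn]
  induction m with
  | zero => simp
  | succ m ih =>
    rw [Nat.count_succ, Nat.count_succ, ih]
    grind

theorem card_skylineColumn_sortPair (β : ℕ →₀ ℕ) (i j : ℕ) :
    #(skylineColumn (sortPair i (i + 1) β) j) = #(skylineColumn β j) := by
  obtain ⟨N, hN⟩ := exists_nat_subset_range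
    (skylineColumn (sortPair i (i + 1) β) j ∪ skylineColumn β j ∪ {i + 1})
  simp only [union_subset_iff, singleton_subset_iff, mem_range] at hN
  rw [← count_mem_eq_card_iff.2 hN.1.1, ← count_mem_eq_card_iff.2 hN.1.2,
    count_skylineColumn_sortPair, if_neg (fun h => hN.2.ne' h.1), add_zero]

theorem skylineLE_iff_count_le : SkylineLE β α ↔
    ∀ j, #(skylineColumn β j) = #(skylineColumn α j) ∧
      ∀ m, Nat.count (· ∈ skylineColumn α j) m ≤ Nat.count (· ∈ skylineColumn β j) m :=
  forall_congr' fun _ => domLE_iff_count_le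

theorem sortPair_skylineLE (β : ℕ →₀ ℕ) (i : ℕ) : SkylineLE (sortPair i (i + 1) β) β := by
  refine skylineLE_iff_count_le.2 fun j => ⟨card_skylineColumn_sortPair β i j, fun m => ?_⟩
  rw [count_skylineColumn_sortPair]
  exact Nat.le_add_right _ _

-- The counts of both columns at `i` and `i + 2` survive sorting; they decide the inequality at the
-- only other critical row `i + 1`.
theorem sortPair_skylineLE_sortPair_iff (hα : α i ≤ α (i + 1)) :
    SkylineLE (sortPair i (i + 1) β) (sortPair i (i + 1) α) ↔ SkylineLE β α := by
  simp only [skylineLE_iff_count_le, card_skylineColumn_sortPair, count_skylineColumn_sortPair]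
  refine forall_congr' fun j => and_congr_right fun _ => ⟨fun h m => ?_, fun h m => ?_⟩ <;>
  · have hm := h m
    have before := h i
    have after := h (i + 2)
    by_cases hmi : m = i + 1
    · subst hmi
      simp only [Nat.count_succ, mem_skylineColumn] at *
      grind
    · simpa only [hmi, false_and, if_false, add_zero] using hm

theorem sortPair_equivMapDomain_swap {σ : Type*} [DecidableEq σ] {i j : σ} (hij : i ≠ j)
    (a : σ →₀ ℕ) : sortPair i j (Finsupp.equivMapDomain (Equiv.swap i j) a) = sortPair i j a := by
  rw [equivMapDomain_swap hij, sortPair_updatePair hij, sortPair, max_comm, min_comm]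

theorem SkylineLE.equivMapDomain_swap (h : SkylineLE β (sortPair i (i + 1) α))
    (hα : α i ≤ α (i + 1)) :
    SkylineLE (Finsupp.equivMapDomain (Equiv.swap i (i + 1)) β) α := by
  rw [← sortPair_skylineLE_sortPair_iff hα, sortPair_equivMapDomain_swap i.succ_ne_self.symm]
  exact (sortPair_skylineLE β i).trans h

theorem sum_mul_sortPair_lt (hi : α i < α (i + 1)) :
    (sortPair i (i + 1) α).sum (fun k m => k * m) < α.sum fun k m => k * m := by
  have := sum_updatePair_add (a := α) (p := max (α i) (α (i + 1))) (q := min (α i) (α (i + 1)))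
    i.succ_ne_self.symm (fun k m => k * m) fun k => k.mul_zero
  rw [sortPair]
  rw [max_eq_right hi.le, min_eq_left hi.le] at this ⊢
  linarith

theorem sortPair_induction {motive : (ℕ →₀ ℕ) → Prop}
    (antitone : ∀ α : ℕ →₀ ℕ, Antitone α → motive α)
    (of_sortPair : ∀ (α : ℕ →₀ ℕ) (i : ℕ), α i < α (i + 1) →
      motive (sortPair i (i + 1) α) → motive α)
    (α : ℕ →₀ ℕ) : motive α := by
  by_cases hα : Antitone α
  · exact antitone α hα
  · obtain ⟨i, hi⟩ : ∃ i, α i < α (i + 1) := by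
      contrapose! hα
      exact antitone_nat_of_succ_le hα
    exact of_sortPair α i hi (sortPair_induction antitone of_sortPair _)
termination_by α.sum fun k m => k * m
decreasing_by exact sum_mul_sortPair_lt hi

end SortPair

section KeyPolynomial

/-- The Newton polytope of a polynomial over any commutative semiring, in any set of variables. -/
def newtonPolytope {σ R : Type*} [CommSemiring R] (f : MvPolynomial σ R) : Set (σ → ℝ) :=
  convexHull ℝ (expVec '' (f.support : Set (σ →₀ ℕ)))

/-- The recursion characterising the family `α ↦ κ_α` of key polynomials, over any commutative
ring. -/
structure IsKeyFamily {R : Type*} [CommRing R] (Key : (ℕ →₀ ℕ) → MvPolynomial ℕ R) : Prop where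
  eq_monomial_of_antitone (α : ℕ →₀ ℕ) (hα : Antitone α) : Key α = monomial α 1
  isDemazure_swap (α : ℕ →₀ ℕ) (i : ℕ) (hi : α i < α (i + 1)) :
    IsDemazure i (i + 1) (Key (Finsupp.equivMapDomain (Equiv.swap i (i + 1)) α)) (Key α)

namespace IsKeyFamily

variable {R : Type*} [CommRing R] {Key : (ℕ →₀ ℕ) → MvPolynomial ℕ R} {α β d : ℕ →₀ ℕ}

theorem isDemazure (hKey : IsKeyFamily Key) {i : ℕ} (hi : α i < α (i + 1)) :
    IsDemazure i (i + 1) (Key (sortPair i (i + 1) α)) (Key α) := by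
  rw [sortPair_eq_equivMapDomain_swap i.succ_ne_self.symm hi.le]
  exact hKey.isDemazure_swap α i hi

theorem eq_of_coeff_ne_zero_of_antitone (hKey : IsKeyFamily Key) (hα : Antitone α)
    (hd : coeff d (Key α) ≠ 0) : d = α := by
  rw [hKey.eq_monomial_of_antitone α hα, coeff_monomial] at hd
  exact (ite_ne_right_iff.1 hd).1.symm

theorem sqNorm_le (hKey : IsKeyFamily Key) (hd : coeff d (Key α) ≠ 0) : sqNorm d ≤ sqNorm α := by
  induction α using sortPair_induction generalizing d with
  | antitone α hα => rw [hKey.eq_of_coeff_ne_zero_of_antitone hα hd]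
  | of_sortPair α i hi ih =>
    obtain ⟨p, q, hsum, hmax, hpq⟩ :=
      (hKey.isDemazure hi).exists_coeff_updatePair_ne_zero i.succ_ne_self.symm hd
    calc sqNorm d ≤ sqNorm (updatePair i (i + 1) d p q) :=
          sqNorm_le_sqNorm_updatePair i.succ_ne_self.symm hsum hmax
      _ ≤ sqNorm (sortPair i (i + 1) α) := ih hpq
      _ = sqNorm α := (sortPair_skylineLE α i).sqNorm_eq

theorem expVec_mem_convexHull (hKey : IsKeyFamily Key) (hd : coeff d (Key α) ≠ 0) :
    expVec d ∈ convexHull ℝ (skylineVertices α) := by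
  induction α using sortPair_induction generalizing d with
  | antitone α hα =>
    rw [hKey.eq_of_coeff_ne_zero_of_antitone hα hd]
    exact subset_convexHull ℝ _ ⟨α, .refl α, rfl⟩
  | of_sortPair α i hi ih =>
    have hii : i ≠ i + 1 := i.succ_ne_self.symm
    obtain ⟨p, q, hsum, hmax, hpq⟩ :=
      (hKey.isDemazure hi).exists_coeff_updatePair_ne_zero hii hd
    have hend := ih hpq
    have hend_swap : expVec (updatePair i (i + 1) d q p) ∈ convexHull ℝ (skylineVertices α) := by
      have himage := Set.mem_image_of_mem (LinearMap.funLeft ℝ ℝ (Equiv.swap i (i + 1))) hend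
      rw [LinearMap.image_convexHull] at himage
      rw [← equivMapDomain_swap_updatePair hii]
      refine convexHull_mono ?_ himage
      rintro _ ⟨_, ⟨β, hβ, rfl⟩, rfl⟩
      exact ⟨_, hβ.equivMapDomain_swap hi.le, rfl⟩
    refine (convex_convexHull ℝ _).segment_subset (convexHull_mono ?_ hend) hend_swap
      (expVec_mem_segment_updatePair hii hsum hmax)
    exact Set.image_mono fun β hβ => hβ.trans (sortPair_skylineLE α i)

theorem coeff_ne_zero [Nontrivial R] (hKey : IsKeyFamily Key) (hβ : SkylineLE β α) :
    coeff β (Key α) ≠ 0 := by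
  induction α using sortPair_induction generalizing β with
  | antitone α hα =>
    rw [hKey.eq_monomial_of_antitone α hα, hβ.eq_of_antitone hα, coeff_monomial, if_pos rfl]
    exact one_ne_zero
  | of_sortPair α i hi ih =>
    have hii : i ≠ i + 1 := i.succ_ne_self.symm
    rw [(hKey.isDemazure hi).coeff_eq_coeff_sortPair hii fun p q hsum hmax => ?_]
    · exact ih ((sortPair_skylineLE_sortPair_iff hi.le).2 hβ)
    · by_contra hpq
      have hle : sqNorm (updatePair i (i + 1) β p q) ≤ sqNorm β :=
        calc _ ≤ sqNorm (sortPair i (i + 1) α) := hKey.sqNorm_le hpq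
          _ = sqNorm α := (sortPair_skylineLE α i).sqNorm_eq
          _ = sqNorm β := hβ.sqNorm_eq.symm
      exact (sqNorm_lt_sqNorm_updatePair hii hsum hmax).not_ge hle

theorem newtonPolytope_eq [Nontrivial R] (hKey : IsKeyFamily Key) (α : ℕ →₀ ℕ) :
    newtonPolytope (Key α) = convexHull ℝ (skylineVertices α) := by
  refine (convexHull_min ?_ (convex_convexHull ℝ _)).antisymm (convexHull_mono ?_)
  · rintro _ ⟨d, hd, rfl⟩
    exact hKey.expVec_mem_convexHull (mem_support_iff.1 hd)
  · exact Set.image_mono fun β hβ => mem_support_iff.2 (hKey.coeff_ne_zero hβ)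

end IsKeyFamily

end KeyPolynomial

theorem stmt13_general {R : Type*} [CommRing R] [Nontrivial R]
    {Key : (ℕ →₀ ℕ) → MvPolynomial ℕ R} (hKey : IsKeyFamily Key) {α : ℕ →₀ ℕ} {n m : ℕ}
    (hn : ∀ k, α k ≠ 0 → k < n) (hm : ∀ k, α k ≤ m) :
    newtonPolytope (Key α) =
      ∑ j ∈ range m, smPolytopeNat n {i ∈ range n | j + 1 ≤ α i} := by
  rw [hKey.newtonPolytope_eq, convexHull_skylineVertices hm]
  refine sum_congr rfl fun j _ => ?_
  rw [smPolytopeNat_eq_convexHull_schubertVertices (filter_subset _ _),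
    filter_range_eq_skylineColumn hn]

/-- The Newton polytope of the key polynomial `κ_α` equals the Minkowski sum of Schubert
matroid polytopes `Σ_{j=1}^n P(SM_n(D(α)_j))`, where `D(α)_j = {i ≤ n : α_i ≥ j}` are
the columns of the skyline diagram of `α` (`0`-indexed below: column `j` is
`{i < n : α_{i+1} ≥ j+1}`). -/
theorem stmt13 (Key : (ℕ →₀ ℕ) → MvPolynomial ℕ ℤ)
    -- If `α` is weakly decreasing then `κ_α = x_1^{α_1} x_2^{α_2} ⋯` (variables are
    -- `0`-indexed: the variable `X i` is `x_{i+1}` and `α i` is `α_{i+1}`).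
    (hbase : ∀ α : ℕ →₀ ℕ, (∀ i j : ℕ, i ≤ j → α j ≤ α i) → Key α = monomial α 1)
    -- If `α i < α (i+1)` then `κ_α = ∂_i (x_i κ_α̂)` where `α̂` swaps entries `i`, `i+1`:
    -- `(xᵢ - xᵢ₊₁) ⬝ κ_α = xᵢ κ_α̂ - sᵢ ⬝ (xᵢ κ_α̂)`.
    (hrec : ∀ (α : ℕ →₀ ℕ) (i : ℕ), α i < α (i + 1) →
      (X i - X (i + 1)) * Key α =
        X i * Key (Finsupp.equivMapDomain (Equiv.swap i (i + 1)) α) -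
          rename (Equiv.swap i (i + 1))
            (X i * Key (Finsupp.equivMapDomain (Equiv.swap i (i + 1)) α)))
    (α : ℕ →₀ ℕ)
    -- `l = max{i : α_i ≠ 0}` (`1`-indexed), i.e. `l` is least with `α_i = 0` for all `i ≥ l`
    (l n : ℕ) (hl₁ : ∀ i, α i ≠ 0 → i < l) (hl₂ : ∀ m, (∀ i, α i ≠ 0 → i < m) → l ≤ m)
    -- `n = max{l, α_1, …, α_l}`
    (hn : n = max l (α.support.sup α))
    :
    newtonPolytopeNat (Key α) =
      ∑ j ∈ Finset.range n,
        smPolytopeNat n ((Finset.range n).filter fun i => j + 1 ≤ α i) := by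
  exact stmt13_general ⟨hbase, hrec⟩ (fun k hk => (hl₁ k hk).trans_le (hn ▸ le_max_left _ _))
    fun k => (apply_le_sup_support α k).trans (hn ▸ le_max_right _ _)
end

section
/- Let α be a composition, l = max{i : α_i ≠ 0}, and n = max{l, α_1, ..., α_l}. Then the support of the key polynomial κ_α equals { ξ^C : C = (C_1,...,C_n), C_j ≤ D(α)_j for all j ∈ [n] }, where D(α)_j = {i ≤ n : α_i ≥ j} are the columns of the skyline diagram of α and ξ^C_i = #{ j : i ∈ C_j }. -/
open Finset MvPolynomial

/-
Let `π_i f = ∂_i (x_i f)`, so that `κ_α = π_i κ_{s_i α}` at every ascent `i` of `α`.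

For `d_i ≥ d_{i+1}`, `π_i` turns the monomial `x^d` into the sum of all monomials on the
`s_i`-string from `d` to `s_i d`. The column contents of skyline diagrams follow the same rule:
those of `α` are exactly the exponents on the `s_i`-strings through those of `s_i α`, since the
transposition `s_i` may be applied to the columns one at a time. So the supports agree by induction
on the number of inversions, provided that no cancellation occurs in `π_i κ_{s_i α}`.

Cancellation is excluded by induction on the number of variables. An expansion
`κ_α = ∑_k x_0^k L_k(x_1, x_2, …)` exists whose coefficients `L_k` are sums of key polynomials:
by the ascents `i ≥ 1` one may assume that `α = (p, q, δ)` with `δ ≤ q`, and if `p < q` then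
`κ_α = π_0 (x_0^q κ_{(p,δ)}(x_1, x_2, …))` is computed from the expansion of `κ_{(p,δ)}`.

For `i ≥ 1` the operator `π_i` acts on each `L_k`, and `π_i κ_γ` is `κ_γ` or `κ_{s_i γ}`, which by
the induction hypothesis has nonnegative coefficients and a support containing the `s_i`-strings
through that of `κ_γ`. The ascent `i = 0` is only used when there is no other one; then the first
entry of `s_0 α` is maximal, so that every exponent of `κ_{s_0 α}` satisfies `d_0 ≥ d_1`.
-/

namespace KeyPolynomial

section Operators

variable {R : Type*} [CommRing R]

/-- The simple transposition `s_i`, acting on polynomials by exchanging the variables `X i` and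
`X (i + 1)`. -/
noncomputable def swapVars (i : ℕ) : MvPolynomial ℕ R →ₐ[R] MvPolynomial ℕ R :=
  rename (Equiv.swap i (i + 1))

@[simp]
lemma swapVars_swapVars (i : ℕ) (f : MvPolynomial ℕ R) : swapVars i (swapVars i f) = f := by
  rw [swapVars, rename_rename, ← Equiv.coe_trans, Equiv.swap_swap, Equiv.coe_refl, rename_id_apply]

@[simp]
lemma swapVars_X_left (i : ℕ) : swapVars i (X i : MvPolynomial ℕ R) = X (i + 1) := by
  simp [swapVars]

@[simp]
lemma swapVars_X_right (i : ℕ) : swapVars i (X (i + 1) : MvPolynomial ℕ R) = X i := by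
  simp [swapVars]

lemma swapVars_X_of_ne {i j : ℕ} (h : j ≠ i) (h' : j ≠ i + 1) :
    swapVars i (X j : MvPolynomial ℕ R) = X j := by
  simp [swapVars, Equiv.swap_apply_of_ne_of_ne h h']

lemma swapVars_comm {i j : ℕ} (h : i + 1 < j) (f : MvPolynomial ℕ R) :
    swapVars i (swapVars j f) = swapVars j (swapVars i f) := by
  have hcomm : (Equiv.swap i (i + 1) : ℕ → ℕ) ∘ Equiv.swap j (j + 1)
      = Equiv.swap j (j + 1) ∘ Equiv.swap i (i + 1) := by
    funext k
    simp only [Function.comp_apply, Equiv.swap_apply_def]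
    grind
  simp only [swapVars, rename_rename, hcomm]

lemma swapVars_braid (i : ℕ) (f : MvPolynomial ℕ R) :
    swapVars i (swapVars (i + 1) (swapVars i f))
      = swapVars (i + 1) (swapVars i (swapVars (i + 1) f)) := by
  have hbraid : (Equiv.swap i (i + 1) : ℕ → ℕ) ∘ Equiv.swap (i + 1) (i + 2) ∘ Equiv.swap i (i + 1)
      = Equiv.swap (i + 1) (i + 2) ∘ Equiv.swap i (i + 1) ∘ Equiv.swap (i + 1) (i + 2) := by
    funext k
    simp only [Function.comp_apply, Equiv.swap_apply_def]
    grind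
  simp only [swapVars, rename_rename, add_assoc, Nat.reduceAdd, hbraid]

lemma X_sub_X_dvd_sub_swapVars (i : ℕ) (f : MvPolynomial ℕ R) :
    X i - X (i + 1) ∣ f - swapVars i f := by
  let I : Ideal (MvPolynomial ℕ R) := Ideal.span {X i - X (i + 1)}
  have hX : Ideal.Quotient.mkₐ R I (X i) = Ideal.Quotient.mkₐ R I (X (i + 1)) :=
    Ideal.Quotient.eq.mpr (Ideal.mem_span_singleton_self _)
  have hmk : Ideal.Quotient.mkₐ R I = (Ideal.Quotient.mkₐ R I).comp (swapVars i) := by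
    refine algHom_ext fun j => ?_
    rw [AlgHom.comp_apply]
    rcases eq_or_ne j i with rfl | hi
    · rw [swapVars_X_left, hX]
    rcases eq_or_ne j (i + 1) with rfl | hi'
    · rw [swapVars_X_right, hX]
    · rw [swapVars_X_of_ne hi hi']
  exact Ideal.mem_span_singleton.mp (Ideal.Quotient.eq.mp (DFunLike.congr_fun hmk f))

lemma X_sub_X_ne_zero [Nontrivial R] {i j : ℕ} (h : i ≠ j) : (X i - X j : MvPolynomial ℕ R) ≠ 0 :=
  sub_ne_zero.mpr (X_injective.ne h)

variable [IsDomain R]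

lemma exists_linearMap_X_sub_X_mul_eq (i : ℕ) :
    ∃ T : MvPolynomial ℕ R →ₗ[R] MvPolynomial ℕ R,
      ∀ f, (X i - X (i + 1)) * T f = X i * f - X (i + 1) * swapVars i f := by
  have hdvd (f : MvPolynomial ℕ R) :
      ∃ g, (X i - X (i + 1)) * g = X i * f - X (i + 1) * swapVars i f := by
    obtain ⟨g, hg⟩ := X_sub_X_dvd_sub_swapVars i (X i * f)
    exact ⟨g, by rw [← hg, map_mul, swapVars_X_left]⟩
  choose T hT using hdvd
  refine ⟨⟨⟨T, fun f g => ?_⟩, fun c f => ?_⟩, hT⟩ <;>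
    apply mul_left_cancel₀ (X_sub_X_ne_zero i.lt_add_one.ne)
  · rw [hT, map_add]
    linear_combination -hT f - hT g
  · rw [hT, map_smul, mul_smul_comm, mul_smul_comm, ← smul_sub, ← hT, ← mul_smul_comm]
    rfl

/-- The Demazure operator `π_i f = ∂_i (x_i f)`, the quotient of `x_i f - s_i (x_i f)` by
`x_i - x_{i+1}`. -/
noncomputable def demazure (i : ℕ) : MvPolynomial ℕ R →ₗ[R] MvPolynomial ℕ R :=
  (exists_linearMap_X_sub_X_mul_eq i).choose

lemma X_sub_X_mul_demazure (i : ℕ) (f : MvPolynomial ℕ R) :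
    (X i - X (i + 1)) * demazure i f = X i * f - X (i + 1) * swapVars i f :=
  (exists_linearMap_X_sub_X_mul_eq i).choose_spec f

lemma demazure_eq_of_mul_eq {i : ℕ} {f g : MvPolynomial ℕ R}
    (h : (X i - X (i + 1)) * g = X i * f - X (i + 1) * swapVars i f) : demazure i f = g :=
  mul_left_cancel₀ (X_sub_X_ne_zero i.lt_add_one.ne) ((X_sub_X_mul_demazure i f).trans h.symm)

lemma demazure_mul_of_swapVars_eq {i : ℕ} {h : MvPolynomial ℕ R} (hh : swapVars i h = h)
    (f : MvPolynomial ℕ R) : demazure i (h * f) = h * demazure i f := by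
  apply demazure_eq_of_mul_eq
  rw [map_mul, hh]
  linear_combination h * X_sub_X_mul_demazure i f

lemma demazure_of_swapVars_eq {i : ℕ} {f : MvPolynomial ℕ R} (hf : swapVars i f = f) :
    demazure i f = f :=
  demazure_eq_of_mul_eq (by rw [hf, sub_mul])

@[simp]
lemma swapVars_demazure (i : ℕ) (f : MvPolynomial ℕ R) :
    swapVars i (demazure i f) = demazure i f := by
  apply mul_left_cancel₀ (X_sub_X_ne_zero i.lt_add_one.ne)
  have h := congrArg (swapVars i) (X_sub_X_mul_demazure i f)
  simp only [map_mul, map_sub, swapVars_X_left, swapVars_X_right, swapVars_swapVars] at h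
  linear_combination -h - X_sub_X_mul_demazure i f

lemma swapVars_demazure_comm {i j : ℕ} (h : i + 1 < j ∨ j + 1 < i) (f : MvPolynomial ℕ R) :
    swapVars i (demazure j f) = demazure j (swapVars i f) := by
  symm
  apply demazure_eq_of_mul_eq
  have hcomm : swapVars i (swapVars j f) = swapVars j (swapVars i f) :=
    h.elim (swapVars_comm · f) fun h => (swapVars_comm h f).symm
  have hmul := congrArg (swapVars i) (X_sub_X_mul_demazure j f)
  simp only [map_mul, map_sub] at hmul
  rwa [swapVars_X_of_ne (by lia) (by lia), swapVars_X_of_ne (by lia) (by lia), hcomm] at hmul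

lemma demazure_X_left_mul (i : ℕ) (f : MvPolynomial ℕ R) :
    demazure i (X i * f) = X i * f + X (i + 1) * demazure i f := by
  apply demazure_eq_of_mul_eq
  rw [map_mul, swapVars_X_left]
  linear_combination X (i + 1) * X_sub_X_mul_demazure i f

lemma demazure_X_right_mul_of_swapVars_eq {i : ℕ} {h : MvPolynomial ℕ R}
    (hh : swapVars i h = h) : demazure i (X (i + 1) * h) = 0 := by
  apply demazure_eq_of_mul_eq
  rw [map_mul, swapVars_X_right, hh]
  ring

lemma demazure_X_left_pow_mul_of_swapVars_eq {i : ℕ} {h : MvPolynomial ℕ R}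
    (hh : swapVars i h = h) (m : ℕ) :
    demazure i (X i ^ m * h) = ∑ p ∈ antidiagonal m, X i ^ p.1 * X (i + 1) ^ p.2 * h := by
  induction m with
  | zero => simp [demazure_of_swapVars_eq hh]
  | succ m ih =>
    rw [pow_succ', mul_assoc, demazure_X_left_mul, ih, Nat.sum_antidiagonal_succ', mul_sum]
    congr 1
    · simp only [pow_succ', pow_zero, mul_one, mul_assoc]
    · exact sum_congr rfl fun p _ => by ring

lemma swapVars_demazure_demazure_succ {i : ℕ} {f : MvPolynomial ℕ R}
    (hf : swapVars (i + 1) f = f) :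
    swapVars i (demazure (i + 1) (demazure i f)) = demazure (i + 1) (demazure i f) := by
  set g := swapVars i f
  have hg : swapVars i (swapVars (i + 1) g) = swapVars (i + 1) g := by rw [swapVars_braid, hf]
  have hX : swapVars i (X (i + 2) : MvPolynomial ℕ R) = X (i + 2) :=
    swapVars_X_of_ne (by lia) (by lia)
  have hX' : swapVars (i + 1) (X i : MvPolynomial ℕ R) = X i :=
    swapVars_X_of_ne (by lia) (by lia)
  have hΔ : (X i - X (i + 1)) * (X i - X (i + 2)) * (X (i + 1) - X (i + 2)) *
        demazure (i + 1) (demazure i f)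
      = X i ^ 2 * (X (i + 1) - X (i + 2)) * f - X (i + 1) ^ 2 * (X i - X (i + 2)) * g
        + X (i + 2) ^ 2 * (X i - X (i + 1)) * swapVars (i + 1) g := by
    have h₁ := X_sub_X_mul_demazure i f
    have h₂ := congrArg (swapVars (i + 1)) h₁
    have h₃ := X_sub_X_mul_demazure (i + 1) (demazure i f)
    simp only [map_mul, map_sub, swapVars_X_left, hX', hf, add_assoc, Nat.reduceAdd] at h₂ h₃
    linear_combination (X i - X (i + 1)) * (X i - X (i + 2)) * h₃
      + (X i - X (i + 2)) * X (i + 1) * h₁ - (X i - X (i + 1)) * X (i + 2) * h₂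
  have hΔ' := congrArg (swapVars i) hΔ
  simp only [map_mul, map_sub, map_add, map_pow, swapVars_X_left, swapVars_X_right, hX, hg, g,
    swapVars_swapVars] at hΔ'
  apply mul_left_cancel₀ (mul_ne_zero (mul_ne_zero (X_sub_X_ne_zero (by lia : i ≠ i + 1))
    (X_sub_X_ne_zero (by lia : i ≠ i + 2))) (X_sub_X_ne_zero (by lia : i + 1 ≠ i + 2)))
  linear_combination -hΔ - hΔ'

lemma swapVars_succ_demazure_demazure {i : ℕ} {f : MvPolynomial ℕ R}
    (hf : swapVars i f = f) :
    swapVars (i + 1) (demazure i (demazure (i + 1) f)) = demazure i (demazure (i + 1) f) := by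
  set g := swapVars (i + 1) f
  have hg : swapVars (i + 1) (swapVars i g) = swapVars i g := by rw [← swapVars_braid, hf]
  have hX : swapVars i (X (i + 2) : MvPolynomial ℕ R) = X (i + 2) :=
    swapVars_X_of_ne (by lia) (by lia)
  have hX' : swapVars (i + 1) (X i : MvPolynomial ℕ R) = X i :=
    swapVars_X_of_ne (by lia) (by lia)
  have hr : swapVars (i + 1) (X (i + 2) : MvPolynomial ℕ R) = X (i + 1) := swapVars_X_right (i + 1)
  have hΔ : (X i - X (i + 1)) * (X i - X (i + 2)) * (X (i + 1) - X (i + 2)) *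
        demazure i (demazure (i + 1) f)
      = X i * X (i + 1) * (X i - X (i + 1)) * f - X i * X (i + 2) * (X i - X (i + 2)) * g
        + X (i + 1) * X (i + 2) * (X (i + 1) - X (i + 2)) * swapVars i g := by
    have h₁ := X_sub_X_mul_demazure (i + 1) f
    have h₂ := congrArg (swapVars i) h₁
    have h₃ := X_sub_X_mul_demazure i (demazure (i + 1) f)
    simp only [map_mul, map_sub, swapVars_X_right, hX, hf, add_assoc, Nat.reduceAdd] at h₁ h₂ h₃
    linear_combination (X (i + 1) - X (i + 2)) * (X i - X (i + 2)) * h₃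
      + (X i - X (i + 2)) * X i * h₁ - (X (i + 1) - X (i + 2)) * X (i + 1) * h₂
  have hΔ' := congrArg (swapVars (i + 1)) hΔ
  simp only [map_mul, map_sub, map_add, swapVars_X_left, hr, hX', hg, g, swapVars_swapVars,
    add_assoc, Nat.reduceAdd] at hΔ'
  apply mul_left_cancel₀ (mul_ne_zero (mul_ne_zero (X_sub_X_ne_zero (by lia : i ≠ i + 1))
    (X_sub_X_ne_zero (by lia : i ≠ i + 2))) (X_sub_X_ne_zero (by lia : i + 1 ≠ i + 2)))
  linear_combination -hΔ - hΔ'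

end Operators

section Compositions

/-- The composition obtained from `α` by exchanging its entries `i` and `i + 1`. -/
noncomputable def swapEntries (i : ℕ) (α : ℕ →₀ ℕ) : ℕ →₀ ℕ :=
  α.equivMapDomain (Equiv.swap i (i + 1))

lemma swapEntries_apply (i : ℕ) (α : ℕ →₀ ℕ) (k : ℕ) :
    swapEntries i α k = α (Equiv.swap i (i + 1) k) := by
  rw [swapEntries, Finsupp.equivMapDomain_apply, Equiv.symm_swap]

@[simp]
lemma swapEntries_left (i : ℕ) (α : ℕ →₀ ℕ) : swapEntries i α i = α (i + 1) := by
  simp [swapEntries_apply]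

@[simp]
lemma swapEntries_right (i : ℕ) (α : ℕ →₀ ℕ) : swapEntries i α (i + 1) = α i := by
  simp [swapEntries_apply]

lemma swapEntries_of_ne {i k : ℕ} (h : k ≠ i) (h' : k ≠ i + 1) (α : ℕ →₀ ℕ) :
    swapEntries i α k = α k := by
  rw [swapEntries_apply, Equiv.swap_apply_of_ne_of_ne h h']

@[simp]
lemma swapEntries_swapEntries (i : ℕ) (α : ℕ →₀ ℕ) : swapEntries i (swapEntries i α) = α := by
  ext k
  rw [swapEntries_apply, swapEntries_apply, Equiv.swap_apply_self]

lemma swapEntries_eq_self {i : ℕ} {α : ℕ →₀ ℕ} (h : α i = α (i + 1)) : swapEntries i α = α := by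
  ext k
  rcases eq_or_ne k i with rfl | hk
  · rw [swapEntries_left, h]
  rcases eq_or_ne k (i + 1) with rfl | hk'
  · rw [swapEntries_right, h]
  · rw [swapEntries_of_ne hk hk']

lemma swapVars_monomial {R : Type*} [CommRing R] (i : ℕ) (α : ℕ →₀ ℕ) (z : R) :
    swapVars i (monomial α z) = monomial (swapEntries i α) z := by
  rw [swapVars, rename_monomial, swapEntries, Finsupp.equivMapDomain_eq_mapDomain]

lemma exists_eq_add_single {i : ℕ} {α : ℕ →₀ ℕ} (h : α (i + 1) ≤ α i) :
    ∃ (b : ℕ →₀ ℕ) (m : ℕ), b i = b (i + 1) ∧ α = b + Finsupp.single i m := by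
  refine ⟨α.update i (α (i + 1)), α i - α (i + 1), by simp, ?_⟩
  ext k
  rcases eq_or_ne k i with rfl | hk
  · simpa using (Nat.add_sub_cancel' h).symm
  · simp [Finsupp.single_eq_of_ne hk, Function.update_of_ne hk]

lemma swapEntries_add_single {i : ℕ} {b : ℕ →₀ ℕ} (hb : b i = b (i + 1)) (m : ℕ) :
    swapEntries i (b + Finsupp.single i m) = b + Finsupp.single (i + 1) m := by
  have hsingle : swapEntries i (Finsupp.single i m) = Finsupp.single (i + 1) m := by
    rw [swapEntries, Finsupp.equivMapDomain_single, Equiv.swap_apply_left]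
  ext k
  rw [← hsingle, swapEntries_apply, Finsupp.add_apply, Finsupp.add_apply, ← swapEntries_apply,
    ← swapEntries_apply, swapEntries_eq_self hb]

lemma weight_swapEntries_lt {i : ℕ} {α : ℕ →₀ ℕ} (h : α i < α (i + 1)) :
    Finsupp.weight id (swapEntries i α) < Finsupp.weight id α := by
  obtain ⟨b, m, hb, hbm⟩ :=
    exists_eq_add_single (i := i) (α := swapEntries i α) (by simpa using h.le)
  have hα : α = b + Finsupp.single (i + 1) m := by
    rw [← swapEntries_add_single hb, ← hbm, swapEntries_swapEntries]
  have hm : m ≠ 0 := by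
    rintro rfl
    rw [hα, Finsupp.single_zero, add_zero] at h
    exact h.ne hb
  rw [hbm, hα, map_add, map_add, Finsupp.weight_single, Finsupp.weight_single, smul_eq_mul,
    smul_eq_mul, id, id]
  lia

lemma exists_ascent {α : ℕ →₀ ℕ} (h : ¬ Antitone α) : ∃ i, α i < α (i + 1) := by
  by_contra! hα
  exact h (antitone_nat_of_succ_le hα)

@[elab_as_elim]
lemma ascent_induction {P : (ℕ →₀ ℕ) → Prop}
    (antitone : ∀ α : ℕ →₀ ℕ, Antitone α → P α)
    (ascent : ∀ α : ℕ →₀ ℕ, ¬ Antitone α →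
      (∀ i, α i < α (i + 1) → P (swapEntries i α)) → P α)
    (α : ℕ →₀ ℕ) :
    P α := by
  refine (measure (Finsupp.weight (id : ℕ → ℕ))).wf.induction (C := P) α fun α ih => ?_
  by_cases hα : Antitone α
  · exact antitone α hα
  · exact ascent α hα fun i hi => ih _ (weight_swapEntries_lt hi)

/-- The composition `(p, β_0, β_1, …)`. -/
noncomputable def prepend (p : ℕ) (β : ℕ →₀ ℕ) : ℕ →₀ ℕ :=
  Finsupp.single 0 p + β.mapDomain Nat.succ

@[simp]
lemma prepend_zero (p : ℕ) (β : ℕ →₀ ℕ) : prepend p β 0 = p := by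
  rw [prepend, Finsupp.add_apply, Finsupp.single_eq_same,
    Finsupp.mapDomain_of_notMem_range _ _ (by simp), add_zero]

@[simp]
lemma prepend_succ (p : ℕ) (β : ℕ →₀ ℕ) (i : ℕ) : prepend p β (i + 1) = β i := by
  rw [prepend, Finsupp.add_apply, Finsupp.single_eq_of_ne i.succ_ne_zero, zero_add]
  exact Finsupp.mapDomain_apply Nat.succ_injective β i

lemma prepend_injective (p : ℕ) : Function.Injective (prepend p) := by
  intro β γ h
  ext i
  rw [← prepend_succ p β, h, prepend_succ]

lemma exists_eq_prepend (α : ℕ →₀ ℕ) : ∃ p β, α = prepend p β := by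
  refine ⟨α 0, α.comapDomain Nat.succ Nat.succ_injective.injOn, ?_⟩
  ext (_ | i) <;> simp

lemma antitone_prepend_iff {p : ℕ} {β : ℕ →₀ ℕ} :
    Antitone (prepend p β) ↔ β 0 ≤ p ∧ Antitone β := by
  refine ⟨fun h => ⟨by simpa using h (Nat.le_add_left 0 1), antitone_nat_of_succ_le fun i => by
    simpa using h (i + 1).le_succ⟩, fun ⟨h₀, h⟩ => antitone_nat_of_succ_le fun i => ?_⟩
  cases i with
  | zero => simpa using h₀
  | succ i => simpa using h i.le_succ

lemma swapEntries_succ_prepend (i p : ℕ) (β : ℕ →₀ ℕ) :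
    swapEntries (i + 1) (prepend p β) = prepend p (swapEntries i β) := by
  ext k
  rcases k with _ | k
  · rw [swapEntries_of_ne (by lia) (by lia), prepend_zero, prepend_zero]
  rcases eq_or_ne k i with rfl | hk
  · simp
  rcases eq_or_ne k (i + 1) with rfl | hk'
  · simp
  · rw [swapEntries_of_ne (by lia) (by lia), prepend_succ, prepend_succ,
      swapEntries_of_ne hk hk']

lemma swapEntries_zero_prepend (p q : ℕ) (β : ℕ →₀ ℕ) :
    swapEntries 0 (prepend p (prepend q β)) = prepend q (prepend p β) := by
  ext (_ | _ | k)
  · simp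
  · rw [swapEntries_right, prepend_zero, prepend_succ, prepend_zero]
  · rw [swapEntries_of_ne (by lia) (by lia)]
    simp only [prepend_succ]

/-- The compositions supported in the first `n` entries with all entries at most `N`. -/
def box (n N : ℕ) : Set (ℕ →₀ ℕ) :=
  {α | (∀ i, α i ≤ N) ∧ ∀ i, α i ≠ 0 → i < n}

lemma box_mono (n : ℕ) : Monotone (box n) :=
  fun _ _ h _ hα => ⟨fun i => (hα.1 i).trans h, hα.2⟩

lemma prepend_mem_box_iff {n N p : ℕ} {β : ℕ →₀ ℕ} :
    prepend p β ∈ box (n + 1) N ↔ p ≤ N ∧ β ∈ box n N := by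
  constructor
  · rintro ⟨hN, hn⟩
    exact ⟨by simpa using hN 0, fun i => by simpa using hN (i + 1), fun i => by
      simpa using hn (i + 1)⟩
  · rintro ⟨hp, hN, hn⟩
    refine ⟨fun i => ?_, fun i => ?_⟩
    · cases i with
      | zero => simpa using hp
      | succ i => simpa using hN i
    · cases i with
      | zero => simp
      | succ i => simpa using hn i

lemma succ_lt_of_mem_box {n N i : ℕ} {α : ℕ →₀ ℕ} (hα : α ∈ box n N) (hi : α i < α (i + 1)) :
    i + 1 < n :=
  hα.2 (i + 1) (Nat.ne_zero_of_lt hi)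

lemma swapEntries_mem_box {n N i : ℕ} {α : ℕ →₀ ℕ} (hα : α ∈ box n N) (hi : i + 1 < n) :
    swapEntries i α ∈ box n N := by
  refine ⟨fun k => by rw [swapEntries_apply]; exact hα.1 _, fun k hk => ?_⟩
  by_contra! h
  rw [swapEntries_of_ne (by lia) (by lia)] at hk
  exact h.not_gt (hα.2 k hk)

end Compositions

section KeyFamily

variable {R : Type*} [CommRing R] [IsDomain R]

/-- The family of key polynomials: `κ_α` is the monomial `x^α` when `α` is weakly decreasing, and
`κ_α = π_i κ_{s_i α}` at every ascent `i` of `α`. -/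
structure IsKeyFamily (Key : (ℕ →₀ ℕ) → MvPolynomial ℕ R) : Prop where
  of_antitone {α : ℕ →₀ ℕ} : Antitone α → Key α = monomial α 1
  of_ascent {α : ℕ →₀ ℕ} {i : ℕ} : α i < α (i + 1) → Key α = demazure i (Key (swapEntries i α))

variable {Key : (ℕ →₀ ℕ) → MvPolynomial ℕ R}

lemma IsKeyFamily.of_X_sub_X_mul_eq
    (hbase : ∀ α : ℕ →₀ ℕ, (∀ i j : ℕ, i ≤ j → α j ≤ α i) → Key α = monomial α 1)
    (hrec : ∀ (α : ℕ →₀ ℕ) (i : ℕ), α i < α (i + 1) →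
      (X i - X (i + 1)) * Key α =
        X i * Key (Finsupp.equivMapDomain (Equiv.swap i (i + 1)) α) -
          rename (Equiv.swap i (i + 1))
            (X i * Key (Finsupp.equivMapDomain (Equiv.swap i (i + 1)) α))) :
    IsKeyFamily Key where
  of_antitone hα := hbase _ fun _ _ hij => hα hij
  of_ascent {α i} hi := by
    refine (demazure_eq_of_mul_eq ((hrec α i hi).trans ?_)).symm
    rw [map_mul, rename_X, Equiv.swap_apply_left]
    rfl

namespace IsKeyFamily

lemma swapVars_eq_of_lt (hKey : IsKeyFamily Key) {α : ℕ →₀ ℕ} {i : ℕ} (h : α i < α (i + 1)) :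
    swapVars i (Key α) = Key α := by
  rw [hKey.of_ascent h, swapVars_demazure]

lemma swapVars_eq_of_eq (hKey : IsKeyFamily Key) {α : ℕ →₀ ℕ} {i : ℕ} (h : α i = α (i + 1)) :
    swapVars i (Key α) = Key α := by
  induction hw : Finsupp.weight id α using Nat.strong_induction_on generalizing α i with
  | h w ih =>
  subst hw
  replace ih {γ : ℕ →₀ ℕ} {k : ℕ} (hγ : Finsupp.weight id γ < Finsupp.weight id α)
    (hk : γ k = γ (k + 1)) : swapVars k (Key γ) = Key γ := ih _ hγ hk rfl
  by_cases hα : Antitone α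
  · rw [hKey.of_antitone hα, swapVars_monomial, swapEntries_eq_self h]
  obtain ⟨j, hj⟩ := exists_ascent hα
  have hwj := weight_swapEntries_lt hj
  obtain hij | rfl | rfl | rfl | hij :
    i + 1 < j ∨ j = i + 1 ∨ j = i ∨ i = j + 1 ∨ j + 1 < i := by lia
  · rw [hKey.of_ascent hj, swapVars_demazure_comm (.inl hij), ih hwj]
    rwa [swapEntries_of_ne (by lia) (by lia), swapEntries_of_ne (by lia) (by lia)]
  · set β := swapEntries (i + 1) α with hβ
    have hβi : β i < β (i + 1) := by
      rw [hβ, swapEntries_left, swapEntries_of_ne (by lia) (by lia)]; lia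
    have hγ : swapEntries i β (i + 1) = swapEntries i β (i + 2) := by
      rw [swapEntries_right, swapEntries_of_ne (k := i + 2) (by lia) (by lia), hβ,
        swapEntries_of_ne (k := i) (by lia) (by lia), h]
      exact (swapEntries_right (i + 1) α).symm
    rw [hKey.of_ascent hj, hKey.of_ascent hβi]
    exact swapVars_demazure_demazure_succ (ih ((weight_swapEntries_lt hβi).trans hwj) hγ)
  · exact absurd h hj.ne
  · set β := swapEntries j α with hβ
    have hβj : β (j + 1) < β (j + 2) := by
      rw [hβ, swapEntries_right, swapEntries_of_ne (by lia) (by lia)]; lia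
    have hγ : swapEntries (j + 1) β j = swapEntries (j + 1) β (j + 1) := by
      rw [swapEntries_left, swapEntries_of_ne (by lia) (by lia), hβ, swapEntries_left,
        swapEntries_of_ne (by lia) (by lia), h]
    rw [hKey.of_ascent hj, hKey.of_ascent hβj]
    exact swapVars_succ_demazure_demazure (ih ((weight_swapEntries_lt hβj).trans hwj) hγ)
  · rw [hKey.of_ascent hj, swapVars_demazure_comm (.inr hij), ih hwj]
    rwa [swapEntries_of_ne (by lia) (by lia), swapEntries_of_ne (by lia) (by lia)]

lemma swapVars_eq (hKey : IsKeyFamily Key) {α : ℕ →₀ ℕ} {i : ℕ} (h : α i ≤ α (i + 1)) :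
    swapVars i (Key α) = Key α :=
  h.lt_or_eq.elim hKey.swapVars_eq_of_lt hKey.swapVars_eq_of_eq

end IsKeyFamily

/-- The composition `α` with its entries `i` and `i + 1` put in weakly increasing order. -/
noncomputable def sortEntries (i : ℕ) (α : ℕ →₀ ℕ) : ℕ →₀ ℕ :=
  if α i ≤ α (i + 1) then α else swapEntries i α

lemma sortEntries_mem_box {n N i : ℕ} {α : ℕ →₀ ℕ} (hα : α ∈ box n N) (hi : i + 1 < n) :
    sortEntries i α ∈ box n N := by
  unfold sortEntries
  split_ifs
  exacts [hα, swapEntries_mem_box hα hi]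

lemma IsKeyFamily.demazure_eq (hKey : IsKeyFamily Key) (i : ℕ) (α : ℕ →₀ ℕ) :
    demazure i (Key α) = Key (sortEntries i α) := by
  unfold sortEntries
  split_ifs with h
  · exact demazure_of_swapVars_eq (hKey.swapVars_eq h)
  · rw [hKey.of_ascent (i := i) (α := swapEntries i α) (by simpa using h),
      swapEntries_swapEntries]

end KeyFamily

section Branching

section CommRing

variable {R : Type*} [CommRing R]

/-- The substitution `X i ↦ X (i + 1)`, which frees the variable `X 0`. -/
noncomputable def shift : MvPolynomial ℕ R →ₐ[R] MvPolynomial ℕ R :=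
  rename Nat.succ

@[simp]
lemma shift_X (i : ℕ) : shift (X i : MvPolynomial ℕ R) = X (i + 1) :=
  rename_X _ _

lemma swapVars_succ_shift (i : ℕ) (f : MvPolynomial ℕ R) :
    swapVars (i + 1) (shift f) = shift (swapVars i f) := by
  have hcomm : Equiv.swap (i + 1) (i + 2) ∘ Nat.succ = Nat.succ ∘ Equiv.swap i (i + 1) := by
    funext k
    simp only [Function.comp_apply, Equiv.swap_apply_def]
    grind
  simp only [swapVars, shift, rename_rename, add_assoc, Nat.reduceAdd, hcomm]

lemma swapVars_zero_shift_shift (f : MvPolynomial ℕ R) :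
    swapVars 0 (shift (shift f)) = shift (shift f) := by
  have hcomp : Equiv.swap 0 1 ∘ Nat.succ ∘ Nat.succ = Nat.succ ∘ Nat.succ := by
    funext k
    exact Equiv.swap_apply_of_ne_of_ne (by simp) (by simp)
  simp only [swapVars, shift, rename_rename, zero_add, hcomp]

lemma swapVars_zero_X_mul_X_pow (m : ℕ) :
    swapVars 0 ((X 0 * X 1) ^ m : MvPolynomial ℕ R) = (X 0 * X 1) ^ m := by
  rw [map_pow, map_mul, swapVars_X_left, ← zero_add 1, swapVars_X_right, zero_add, mul_comm]

lemma X_pow_mul_shift_monomial (p : ℕ) (β : ℕ →₀ ℕ) (z : R) :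
    X 0 ^ p * shift (monomial β z) = monomial (prepend p β) z := by
  rw [shift, rename_monomial, X_pow_eq_monomial, monomial_mul, one_mul, prepend]

/-- The polynomial `∑_{k ≤ m} x_0 ^ k L_k(x_1, x_2, …)`, an expansion along the first variable. -/
noncomputable def firstVarSum (L : ℕ → MvPolynomial ℕ R) (m : ℕ) : MvPolynomial ℕ R :=
  ∑ k ∈ range (m + 1), X 0 ^ k * shift (L k)

lemma firstVarSum_succ (L : ℕ → MvPolynomial ℕ R) (m : ℕ) :
    firstVarSum L (m + 1) = firstVarSum L m + X 0 ^ (m + 1) * shift (L (m + 1)) :=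
  sum_range_succ _ _

lemma firstVarSum_single (p : ℕ) (f : MvPolynomial ℕ R) (m : ℕ) :
    firstVarSum (Pi.single p f) m = if p ≤ m then X 0 ^ p * shift f else 0 := by
  have hterm (k : ℕ) : X 0 ^ k * shift ((Pi.single p f : ℕ → MvPolynomial ℕ R) k)
      = if p = k then X 0 ^ p * shift f else 0 := by
    rcases eq_or_ne p k with rfl | hk
    · simp
    · simp [hk]
  simp only [firstVarSum, hterm, sum_ite_eq, mem_range, Nat.lt_succ_iff]

/-- The sums of key polynomials `κ_β` with `β` in `box n M`. -/
noncomputable def keyCone (Key : (ℕ →₀ ℕ) → MvPolynomial ℕ R) (n M : ℕ) :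
    AddSubmonoid (MvPolynomial ℕ R) :=
  AddSubmonoid.closure (Key '' box n M)

lemma key_mem_keyCone {Key : (ℕ →₀ ℕ) → MvPolynomial ℕ R} {n M : ℕ} {β : ℕ →₀ ℕ}
    (hβ : β ∈ box n M) : Key β ∈ keyCone Key n M :=
  AddSubmonoid.subset_closure ⟨β, hβ, rfl⟩

lemma keyCone_mono (Key : (ℕ →₀ ℕ) → MvPolynomial ℕ R) (n : ℕ) :
    Monotone (keyCone Key n) :=
  fun _ _ h => AddSubmonoid.closure_mono (Set.image_mono (box_mono n h))

end CommRing

variable {R : Type*} [CommRing R] [IsDomain R]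

lemma demazure_succ_X_pow_mul_shift (i k : ℕ) (f : MvPolynomial ℕ R) :
    demazure (i + 1) (X 0 ^ k * shift f) = X 0 ^ k * shift (demazure i f) := by
  have hX : swapVars (i + 1) (X 0 ^ k : MvPolynomial ℕ R) = X 0 ^ k := by
    rw [map_pow, swapVars_X_of_ne (by lia) (by lia)]
  rw [demazure_mul_of_swapVars_eq hX]
  congr 1
  apply demazure_eq_of_mul_eq
  have h := congrArg shift (X_sub_X_mul_demazure i f)
  simpa only [map_mul, map_sub, shift_X, swapVars_succ_shift] using h

lemma demazure_succ_firstVarSum (i : ℕ) (L : ℕ → MvPolynomial ℕ R) (m : ℕ) :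
    demazure (i + 1) (firstVarSum L m) = firstVarSum (fun k => demazure i (L k)) m := by
  simp only [firstVarSum, map_sum, demazure_succ_X_pow_mul_shift]

lemma demazure_zero_X_pow_mul_shift_firstVarSum (L : ℕ → MvPolynomial ℕ R) (t m : ℕ) :
    demazure 0 (X 0 ^ (t + m) * shift (X 0 ^ t * firstVarSum L m))
      = ∑ c ∈ range (m + 1), X 0 ^ (t + c) * shift (X 0 ^ (t + m - c) * firstVarSum L c) := by
  induction m with
  | zero =>
    rw [zero_add, sum_range_one, Nat.sub_zero, add_zero]
    apply demazure_of_swapVars_eq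
    rw [firstVarSum, zero_add, sum_range_one, pow_zero, one_mul, map_mul shift, map_pow, shift_X,
      ← mul_assoc, ← mul_pow, map_mul, swapVars_zero_shift_shift, swapVars_zero_X_mul_X_pow]
  | succ m ih =>
    have hzero : demazure 0 (X 0 ^ (t + m) * shift (X 0 ^ t * (X 0 ^ (m + 1) * shift (L (m + 1)))))
        = 0 := by
      have h := demazure_X_right_mul_of_swapVars_eq (i := 0)
        (h := (X 0 * X 1) ^ (t + m) * shift (shift (L (m + 1))))
        (by rw [map_mul, swapVars_zero_shift_shift, swapVars_zero_X_mul_X_pow])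
      rw [← h]
      simp only [map_mul, map_pow, shift_X]
      congr 1
      ring
    have hstep : X 0 ^ (t + (m + 1)) * shift (X 0 ^ t * firstVarSum L (m + 1))
        = X 0 * (X 0 ^ (t + m) * shift (X 0 ^ t * firstVarSum L (m + 1))) := by ring
    rw [hstep, demazure_X_left_mul, ← hstep, sum_range_succ, add_comm]
    congr 1
    · rw [firstVarSum_succ, mul_add, map_add shift, mul_add, map_add, hzero, add_zero, ih, mul_sum]
      refine sum_congr rfl fun c hc => ?_
      rw [show t + (m + 1) - c = t + m - c + 1 by grind, pow_succ' _ (t + m - c)]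
      simp only [map_mul, shift_X]
      ring
    · rw [Nat.add_sub_cancel]

/-- The coefficients of the powers of `X 0` in the key polynomial of `(p, q, δ_0, δ_1, …)`, where
`p < q`, obtained from those of `(p, δ_0, δ_1, …)`. -/
noncomputable def truncatedPart (q : ℕ) (K : ℕ → MvPolynomial ℕ R) (c : ℕ) : MvPolynomial ℕ R :=
  if c ≤ q then X 0 ^ (q - c) * firstVarSum K c else 0

lemma demazure_zero_eq_sum_truncatedPart (K : ℕ → MvPolynomial ℕ R) (t m : ℕ) :
    demazure 0 (X 0 ^ (t + m) * shift (X 0 ^ t * firstVarSum K m))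
      = ∑ c ∈ range (m + 1), X 0 ^ (t + c) * shift (truncatedPart (t + m) K c) := by
  rw [demazure_zero_X_pow_mul_shift_firstVarSum]
  refine sum_congr rfl fun c hc => ?_
  rw [truncatedPart, if_pos (by grind)]

variable {Key : (ℕ →₀ ℕ) → MvPolynomial ℕ R}

lemma IsKeyFamily.prepend_eq (hKey : IsKeyFamily Key) {p : ℕ} {β : ℕ →₀ ℕ} (hβ : ∀ i, β i ≤ p) :
    Key (prepend p β) = X 0 ^ p * shift (Key β) := by
  induction β using ascent_induction with
  | antitone β hanti =>
    rw [hKey.of_antitone (antitone_prepend_iff.mpr ⟨hβ 0, hanti⟩), hKey.of_antitone hanti,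
      X_pow_mul_shift_monomial]
  | ascent β hanti ih =>
    obtain ⟨i, hi⟩ := exists_ascent hanti
    rw [hKey.of_ascent hi, ← demazure_succ_X_pow_mul_shift,
      ← ih i hi fun k => by rw [swapEntries_apply]; exact hβ _, ← swapEntries_succ_prepend]
    exact hKey.of_ascent (by simpa using hi)

namespace IsKeyFamily

lemma demazure_mem_keyCone (hKey : IsKeyFamily Key) {n M i : ℕ} (hi : i + 1 < n)
    {f : MvPolynomial ℕ R} (hf : f ∈ keyCone Key n M) : demazure i f ∈ keyCone Key n M := by
  have hle : keyCone Key n M ≤ (keyCone Key n M).comap (demazure i).toAddMonoidHom := by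
    refine AddSubmonoid.closure_le.mpr ?_
    rintro _ ⟨β, hβ, rfl⟩
    change demazure i (Key β) ∈ keyCone Key n M
    rw [hKey.demazure_eq]
    exact key_mem_keyCone (sortEntries_mem_box hβ hi)
  exact hle hf

lemma X_pow_mul_shift_mem_keyCone (hKey : IsKeyFamily Key) {n q M : ℕ} (hq : q ≤ M)
    {f : MvPolynomial ℕ R} (hf : f ∈ keyCone Key n q) :
    X 0 ^ M * shift f ∈ keyCone Key (n + 1) M := by
  have hle : keyCone Key n q ≤ (keyCone Key (n + 1) M).comap
      ((AddMonoidHom.mulLeft (X 0 ^ M)).comp (shift (R := R)).toRingHom.toAddMonoidHom) := by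
    refine AddSubmonoid.closure_le.mpr ?_
    rintro _ ⟨β, hβ, rfl⟩
    have hβM := box_mono n hq hβ
    change X 0 ^ M * shift (Key β) ∈ keyCone Key (n + 1) M
    rw [← hKey.prepend_eq hβM.1]
    exact key_mem_keyCone (prepend_mem_box_iff.mpr ⟨le_rfl, hβM⟩)
  exact hle hf

end IsKeyFamily

/-- The polynomials `K k` are the coefficients of the powers of `X 0` in the key polynomial of
`prepend p β`, and they are sums of key polynomials. So are the truncations of `Key (prepend p β)`
to degree at most `C` in `X 0`, once multiplied by `X 0 ^ (M - C)`: these are the coefficients of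
the powers of `X 0` in the key polynomial of `(p, M, β_0, β_1, …)` if `p < M`. -/
structure IsBranching (Key : (ℕ →₀ ℕ) → MvPolynomial ℕ R) (n N p : ℕ) (β : ℕ →₀ ℕ)
    (K : ℕ → MvPolynomial ℕ R) : Prop where
  eq_firstVarSum : Key (prepend p β) = firstVarSum K N
  mem_keyCone (k : ℕ) : K k ∈ keyCone Key n N
  truncation_mem_keyCone {C M : ℕ} : C ≤ M → (∀ i, β i ≤ M) →
    X 0 ^ (M - C) * firstVarSum K C ∈ keyCone Key (n + 1) M

namespace IsKeyFamily

lemma isBranching_single (hKey : IsKeyFamily Key) {n N p : ℕ} {β : ℕ →₀ ℕ}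
    (hp : p ≤ N) (hβ : β ∈ box n p) : IsBranching Key n N p β (Pi.single p (Key β)) where
  eq_firstVarSum := by rw [hKey.prepend_eq hβ.1, firstVarSum_single, if_pos hp]
  mem_keyCone k := by
    rcases eq_or_ne k p with rfl | hk
    · rw [Pi.single_eq_same]
      exact key_mem_keyCone (box_mono n hp hβ)
    · rw [Pi.single_eq_of_ne hk]
      exact zero_mem _
  truncation_mem_keyCone {C M} hC _ := by
    rw [firstVarSum_single]
    split_ifs with hpC
    · rw [← mul_assoc, ← pow_add]
      exact keyCone_mono _ _ (by lia)
        (hKey.X_pow_mul_shift_mem_keyCone (M := M - C + p) (by lia) (key_mem_keyCone hβ))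
    · rw [mul_zero]
      exact zero_mem _

lemma isBranching_of_ascent (hKey : IsKeyFamily Key) {n N p i : ℕ} {β : ℕ →₀ ℕ}
    (hi : β i < β (i + 1)) (hn : i + 1 < n) {K : ℕ → MvPolynomial ℕ R}
    (hK : IsBranching Key n N p (swapEntries i β) K) :
    IsBranching Key n N p β fun k => demazure i (K k) where
  eq_firstVarSum := by
    rw [← demazure_succ_firstVarSum, ← hK.eq_firstVarSum, ← swapEntries_succ_prepend]
    exact hKey.of_ascent (by simpa using hi)
  mem_keyCone k := hKey.demazure_mem_keyCone hn (hK.mem_keyCone k)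
  truncation_mem_keyCone {C M} hC hβ := by
    have hX : swapVars (i + 1) (X 0 ^ (M - C) : MvPolynomial ℕ R) = X 0 ^ (M - C) := by
      rw [map_pow, swapVars_X_of_ne (by lia) (by lia)]
    rw [← demazure_succ_firstVarSum, ← demazure_mul_of_swapVars_eq hX]
    refine hKey.demazure_mem_keyCone (by lia) (hK.truncation_mem_keyCone hC fun k => ?_)
    rw [swapEntries_apply]
    exact hβ _

lemma prepend_prepend_eq (hKey : IsKeyFamily Key) {p q : ℕ} {δ : ℕ →₀ ℕ} (hpq : p < q)
    (hδ : ∀ i, δ i ≤ q) :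
    Key (prepend p (prepend q δ)) = demazure 0 (X 0 ^ q * shift (Key (prepend p δ))) := by
  rw [hKey.of_ascent (i := 0) (by simpa using hpq), swapEntries_zero_prepend, hKey.prepend_eq]
  rintro (_ | i)
  · simpa using hpq.le
  · simpa using hδ i

lemma sum_truncatedPart_mem_keyCone (hKey : IsKeyFamily Key) {n p t m : ℕ} {δ : ℕ →₀ ℕ}
    (hδ : ∀ i, δ i ≤ t + m) {K : ℕ → MvPolynomial ℕ R}
    (hK : IsBranching Key n (t + m) p δ K) :
    ∑ c ∈ range (m + 1), X 0 ^ (t + c) * shift (truncatedPart (t + m) K c)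
      ∈ keyCone Key (n + 2) (t + m) := by
  rw [← demazure_zero_eq_sum_truncatedPart]
  refine hKey.demazure_mem_keyCone (by lia) (hKey.X_pow_mul_shift_mem_keyCone le_rfl ?_)
  simpa using hK.truncation_mem_keyCone (Nat.le_add_left m t) hδ

lemma isBranching_truncatedPart (hKey : IsKeyFamily Key) {n N p q : ℕ} {δ : ℕ →₀ ℕ}
    (hpq : p < q) (hqN : q ≤ N) (hδ : ∀ i, δ i ≤ q) {K : ℕ → MvPolynomial ℕ R}
    (hK : IsBranching Key n q p δ K) :
    IsBranching Key (n + 1) N p (prepend q δ) (truncatedPart q K) := by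
  have hmem (c : ℕ) : truncatedPart q K c ∈ keyCone Key (n + 1) q := by
    unfold truncatedPart
    split_ifs with hc
    · exact hK.truncation_mem_keyCone hc hδ
    · exact zero_mem _
  refine ⟨?_, fun c => keyCone_mono _ _ hqN (hmem c), fun {C M} hC hM => ?_⟩
  · have h := demazure_zero_eq_sum_truncatedPart K 0 q
    simp only [zero_add, pow_zero, one_mul] at h
    rw [hKey.prepend_prepend_eq hpq hδ, hK.eq_firstVarSum, h, firstVarSum]
    refine sum_subset (range_mono (by lia)) fun c _ hc => ?_
    rw [truncatedPart, if_neg (by simpa using hc), map_zero, mul_zero]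
  · have hqM : q ≤ M := by simpa using hM 0
    obtain ⟨t, rfl⟩ := Nat.exists_eq_add_of_le' hC
    obtain ⟨r, hrC, hr, hlow⟩ : ∃ r ≤ C + 1, (∀ c ≥ r, q ≤ t + c) ∧
        ∑ c ∈ range r, X 0 ^ (t + c) * shift (truncatedPart q K c) ∈ keyCone Key (n + 2) q := by
      rcases le_or_gt t q with htq | htq
      · obtain ⟨m, rfl⟩ := Nat.exists_eq_add_of_le htq
        exact ⟨m + 1, by lia, by lia, hKey.sum_truncatedPart_mem_keyCone hδ hK⟩
      · exact ⟨0, by lia, by lia, by simp⟩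
    simp only [Nat.add_sub_cancel, firstVarSum, mul_sum, ← mul_assoc, ← pow_add]
    rw [← sum_range_add_sum_Ico _ hrC]
    refine add_mem (keyCone_mono _ _ hqM hlow) (sum_mem fun c hc => ?_)
    obtain ⟨hrc, hcC⟩ := mem_Ico.mp hc
    exact keyCone_mono _ _ (by lia) (hKey.X_pow_mul_shift_mem_keyCone (hr c hrc) (hmem c))

theorem exists_isBranching (hKey : IsKeyFamily Key) {n N p : ℕ} {β : ℕ →₀ ℕ} (hp : p ≤ N)
    (hβ : β ∈ box n N) : ∃ K, IsBranching Key n N p β K := by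
  induction n generalizing N p β with
  | zero =>
    exact ⟨_, hKey.isBranching_single hp ⟨fun i => by grind [hβ.2 i], hβ.2⟩⟩
  | succ n ihn =>
    induction β using ascent_induction with
    | antitone β hanti =>
      obtain ⟨q, δ, rfl⟩ := exists_eq_prepend β
      obtain ⟨hδq, hδ⟩ := antitone_prepend_iff.mp hanti
      replace hδq (i : ℕ) : δ i ≤ q := (hδ i.zero_le).trans hδq
      obtain ⟨hqN, hδN⟩ := prepend_mem_box_iff.mp hβ
      rcases le_or_gt q p with hqp | hpq
      · exact ⟨_, hKey.isBranching_single hp (box_mono _ hqp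
          (prepend_mem_box_iff.mpr ⟨le_rfl, hδq, hδN.2⟩))⟩
      · obtain ⟨K, hK⟩ := ihn hpq.le ⟨hδq, hδN.2⟩
        exact ⟨_, hKey.isBranching_truncatedPart hpq hqN hδq hK⟩
    | ascent β hanti ih =>
      obtain ⟨i, hi⟩ := exists_ascent hanti
      have hin := succ_lt_of_mem_box hβ hi
      obtain ⟨K, hK⟩ := ih i hi (swapEntries_mem_box hβ hin)
      exact ⟨_, hKey.isBranching_of_ascent hi hin hK⟩

end IsKeyFamily

end Branching

section Gale

/-- The Gale order on finite sets of natural numbers: `R` and `S` have equally many elements, and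
every initial segment contains at least as many elements of `R` as of `S`. -/
def GaleLE (R S : Finset ℕ) : Prop :=
  #R = #S ∧ ∀ k, Nat.count (· ∈ S) k ≤ Nat.count (· ∈ R) k

lemma count_mem_le_card (S : Finset ℕ) (k : ℕ) : Nat.count (· ∈ S) k ≤ #S := by
  rw [Nat.count_eq_card_filter_range]
  exact card_le_card fun i hi => (mem_filter.mp hi).2

lemma get_sort_lt_iff (S : Finset ℕ) (k v : ℕ) (hk : k < (S.sort (· ≤ ·)).length) :
    (S.sort (· ≤ ·)).get ⟨k, hk⟩ < v ↔ k < Nat.count (· ∈ S) v := by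
  have hfin : (Set.ofPred (· ∈ S)).Finite := S.finite_toSet
  have hto : hfin.toFinset = S := ext fun _ => hfin.mem_toFinset
  have hnth : (S.sort (· ≤ ·)).get ⟨k, hk⟩ = Nat.nth (· ∈ S) k := by
    rw [Nat.nth_eq_getD_sort hfin, hto, List.getD_eq_getElem _ _ hk, List.get_eq_getElem]
  have hcount : Nat.count (· ∈ S) (Nat.nth (· ∈ S) k + 1) = k + 1 :=
    Nat.count_nth_succ fun hf => by rwa [length_sort, ← hto] at hk
  rw [hnth]
  exact ⟨fun h => hcount.ge.trans (Nat.count_monotone (· ∈ S) (Nat.succ_le_of_lt h)),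
    Nat.nth_lt_of_lt_count⟩

lemma domLE_iff_galeLE (R S : Finset ℕ) : DomLE R S ↔ GaleLE R S := by
  refine and_congr_right fun hcard => ⟨fun h v => ?_, fun h k hR hS => ?_⟩
  · by_contra! hlt
    have hS : Nat.count (· ∈ R) v < (S.sort (· ≤ ·)).length := by
      rw [length_sort]
      exact hlt.trans_le (count_mem_le_card S v)
    have hR : Nat.count (· ∈ R) v < (R.sort (· ≤ ·)).length := by
      rwa [length_sort, hcard, ← length_sort (· ≤ ·)]
    have hSv := (get_sort_lt_iff S _ v hS).mpr hlt
    exact lt_irrefl _ ((get_sort_lt_iff R _ v hR).mp ((h _ hR hS).trans_lt hSv))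
  · have hk := (get_sort_lt_iff S k _ hS).mp (Nat.lt_add_one _)
    exact Nat.lt_succ_iff.mp ((get_sort_lt_iff R k _ hR).mpr (hk.trans_le (h _)))

namespace GaleLE

lemma refl (S : Finset ℕ) : GaleLE S S :=
  ⟨rfl, fun _ => le_rfl⟩

lemma trans {R S T : Finset ℕ} (h : GaleLE R S) (h' : GaleLE S T) : GaleLE R T :=
  ⟨h.1.trans h'.1, fun k => (h'.2 k).trans (h.2 k)⟩

lemma subset_range {R S : Finset ℕ} (h : GaleLE R S) {n : ℕ} (hS : S ⊆ range n) :
    R ⊆ range n := by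
  have hSn : {i ∈ range n | i ∈ S} = S := by
    rw [filter_mem_eq_inter, inter_eq_right.mpr hS]
  have hcount := h.2 n
  rw [Nat.count_eq_card_filter_range, Nat.count_eq_card_filter_range, hSn, ← h.1,
    filter_mem_eq_inter] at hcount
  exact inter_eq_right.mp (eq_of_subset_of_card_le inter_subset_right hcount)

lemma eq_of_right_range {R : Finset ℕ} {n : ℕ} (h : GaleLE R (range n)) : R = range n :=
  eq_of_subset_of_card_le (h.subset_range Subset.rfl) h.1.ge

lemma zero_mem {R S : Finset ℕ} (h : GaleLE R S) (hS : 0 ∈ S) : 0 ∈ R := by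
  have hcount := h.2 1
  simp only [Nat.count_succ, Nat.count_zero, hS, if_true] at hcount
  by_contra hR
  simp [hR] at hcount

end GaleLE

/-- The image of `S` under the transposition `s_i`. -/
def swapMems (i : ℕ) (S : Finset ℕ) : Finset ℕ :=
  S.map (Equiv.swap i (i + 1)).toEmbedding

lemma card_swapMems (i : ℕ) (S : Finset ℕ) : #(swapMems i S) = #S :=
  card_map _

lemma mem_swapMems {i k : ℕ} {S : Finset ℕ} : k ∈ swapMems i S ↔ Equiv.swap i (i + 1) k ∈ S := by
  rw [swapMems, mem_map_equiv, Equiv.symm_swap]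

@[simp]
lemma left_mem_swapMems {i : ℕ} {S : Finset ℕ} : i ∈ swapMems i S ↔ i + 1 ∈ S := by
  rw [mem_swapMems, Equiv.swap_apply_left]

@[simp]
lemma right_mem_swapMems {i : ℕ} {S : Finset ℕ} : i + 1 ∈ swapMems i S ↔ i ∈ S := by
  rw [mem_swapMems, Equiv.swap_apply_right]

lemma mem_swapMems_of_ne {i k : ℕ} (h : k ≠ i) (h' : k ≠ i + 1) {S : Finset ℕ} :
    k ∈ swapMems i S ↔ k ∈ S := by
  rw [mem_swapMems, Equiv.swap_apply_of_ne_of_ne h h']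

lemma count_swapMems_of_ne {i k : ℕ} (hk : k ≠ i + 1) (S : Finset ℕ) :
    Nat.count (· ∈ swapMems i S) k = Nat.count (· ∈ S) k := by
  have hle {k : ℕ} (hk : k ≤ i) : Nat.count (· ∈ swapMems i S) k = Nat.count (· ∈ S) k := by
    simp only [Nat.count_eq_card_filter_range]
    congr 1
    refine filter_congr fun l hl => mem_swapMems_of_ne ?_ ?_ <;> grind
  have hge (l : ℕ) :
      Nat.count (· ∈ swapMems i S) (i + 2 + l) = Nat.count (· ∈ S) (i + 2 + l) := by
    induction l with
    | zero =>
      simp only [add_zero, Nat.count_succ, left_mem_swapMems, right_mem_swapMems, hle le_rfl]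
      ring
    | succ l ih =>
      rw [← add_assoc, Nat.count_succ, Nat.count_succ, ih,
        if_congr (mem_swapMems_of_ne (by lia) (by lia)) rfl rfl]
  rcases le_or_gt k i with h | h
  · exact hle h
  · obtain ⟨l, rfl⟩ := Nat.exists_eq_add_of_le (show i + 2 ≤ k by lia)
    exact hge l

lemma count_swapMems_succ (i : ℕ) (S : Finset ℕ) :
    Nat.count (· ∈ swapMems i S) (i + 1)
      = Nat.count (· ∈ S) i + if i + 1 ∈ S then 1 else 0 := by
  simp only [Nat.count_succ, left_mem_swapMems, count_swapMems_of_ne i.lt_add_one.ne]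

namespace GaleLE

lemma swapMems_self {i : ℕ} {S : Finset ℕ} (hS : i ∈ S → i + 1 ∈ S) : GaleLE (swapMems i S) S := by
  refine ⟨card_swapMems i S, fun k => ?_⟩
  rcases eq_or_ne k (i + 1) with rfl | hk
  · rw [count_swapMems_succ, Nat.count_succ]
    grind
  · rw [count_swapMems_of_ne hk]

lemma swapMems_left {i : ℕ} {R S : Finset ℕ} (hS : i ∈ S → i + 1 ∈ S) (h : GaleLE R S) :
    GaleLE (swapMems i R) S := by
  refine ⟨(card_swapMems i R).trans h.1, fun k => ?_⟩
  rcases eq_or_ne k (i + 1) with rfl | hk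
  · have h₀ := h.2 i
    have h₂ := h.2 (i + 2)
    rw [count_swapMems_succ]
    simp only [Nat.count_succ] at h₂ ⊢
    grind
  · rw [count_swapMems_of_ne hk]
    exact h.2 k

lemma swapMems_right {i : ℕ} {R S : Finset ℕ} (hS : i ∈ S → i + 1 ∈ S) (h : GaleLE R S) :
    GaleLE (if i ∈ R then R else swapMems i R) (swapMems i S) := by
  refine ⟨by split_ifs <;> simp only [card_swapMems, h.1], fun k => ?_⟩
  rcases eq_or_ne k (i + 1) with rfl | hk
  · have h₀ := h.2 i
    have h₂ := h.2 (i + 2)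
    simp only [Nat.count_succ] at h₂
    rw [count_swapMems_succ]
    by_cases hR : i ∈ R
    · rw [if_pos hR, Nat.count_succ]
      grind
    · rw [if_neg hR, count_swapMems_succ]
      grind
  · split_ifs <;> simp only [count_swapMems_of_ne hk] <;> exact h.2 k

end GaleLE

end Gale

section Skyline

/-- The `j`-th column (counted from `0`) of the skyline diagram of `α`. -/
def column (α : ℕ →₀ ℕ) (j : ℕ) : Finset ℕ :=
  {i ∈ α.support | j < α i}

lemma mem_column {α : ℕ →₀ ℕ} {i j : ℕ} : i ∈ column α j ↔ j < α i := by
  rw [column, mem_filter, Finsupp.mem_support_iff]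
  lia

lemma column_swapEntries (i : ℕ) (α : ℕ →₀ ℕ) (j : ℕ) :
    column (swapEntries i α) j = swapMems i (column α j) := by
  ext k
  rw [mem_swapMems, mem_column, mem_column, swapEntries_apply]

lemma exists_column_eq_range {α : ℕ →₀ ℕ} (hα : Antitone α) (j : ℕ) :
    ∃ m, column α j = range m := by
  classical
  have hex : ∃ m, α m ≤ j := by
    obtain ⟨m, hm⟩ := Infinite.exists_notMem_finset α.support
    exact ⟨m, by simp [Finsupp.notMem_support_iff.mp hm]⟩
  refine ⟨Nat.find hex, ext fun i => ?_⟩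
  rw [mem_column, mem_range, Nat.lt_find_iff]
  exact ⟨fun h m hm => by have := hα hm; lia, fun h => not_le.mp (h i le_rfl)⟩

/-- The content `ξ^C` of the columns `C 0, …, C (N - 1)`. -/
noncomputable def content (N : ℕ) (C : ℕ → Finset ℕ) : ℕ →₀ ℕ :=
  ∑ j ∈ range N, ∑ i ∈ C j, Finsupp.single i 1

lemma content_apply_eq_sum (N : ℕ) (C : ℕ → Finset ℕ) (i : ℕ) :
    content N C i = ∑ j ∈ range N, if i ∈ C j then 1 else 0 := by
  simp only [content, Finsupp.finsetSum_apply, Finsupp.single_apply, sum_ite_eq']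

lemma content_apply (N : ℕ) (C : ℕ → Finset ℕ) (i : ℕ) :
    content N C i = #{j ∈ range N | i ∈ C j} := by
  rw [content_apply_eq_sum, card_filter]

lemma content_column {N : ℕ} {α : ℕ →₀ ℕ} (hα : ∀ i, α i ≤ N) : content N (column α) = α := by
  ext i
  have hrange : {j ∈ range N | j < α i} = range (α i) := by
    ext j
    rw [mem_filter, mem_range, mem_range]
    exact and_iff_right_of_imp fun h => h.trans_le (hα i)
  simp only [content_apply, mem_column, hrange, card_range]

/-- The contents `ξ^C` of the sequences of `N` columns `C` that are bounded, in the Gale order, by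
the first `N` columns of the skyline diagram of `α`. -/
def columnContents (N : ℕ) (α : ℕ →₀ ℕ) : Set (ℕ →₀ ℕ) :=
  {d | ∃ C : ℕ → Finset ℕ, (∀ j < N, GaleLE (C j) (column α j)) ∧ content N C = d}

lemma columnContents_of_antitone {N : ℕ} {α : ℕ →₀ ℕ} (hα : Antitone α) (hN : ∀ i, α i ≤ N) :
    columnContents N α = {α} := by
  refine Set.Subset.antisymm ?_ ?_
  · rintro _ ⟨C, hC, rfl⟩
    have hcol : ∀ j < N, C j = column α j := fun j hj => by
      obtain ⟨m, hm⟩ := exists_column_eq_range hα j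
      rw [hm]
      exact (hm ▸ hC j hj).eq_of_right_range
    calc content N C = content N (column α) :=
          sum_congr rfl fun j hj => by rw [hcol j (mem_range.mp hj)]
      _ = α := content_column hN
  · exact Set.singleton_subset_iff.mpr
      ⟨column α, fun j _ => GaleLE.refl _, content_column hN⟩

lemma apply_one_le_apply_zero_of_mem_columnContents {N : ℕ} {α d : ℕ →₀ ℕ}
    (hα : ∀ i, α i ≤ α 0) (hd : d ∈ columnContents N α) : d 1 ≤ d 0 := by
  obtain ⟨C, hC, rfl⟩ := hd
  rw [content_apply, content_apply]
  refine card_le_card fun j hj => ?_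
  obtain ⟨hjN, h1⟩ := mem_filter.mp hj
  have hCj := hC j (mem_range.mp hjN)
  have hne : (column α j).Nonempty := card_pos.mp (hCj.1 ▸ card_pos.mpr ⟨1, h1⟩)
  obtain ⟨k, hk⟩ := hne
  exact mem_filter.mpr ⟨hjN, hCj.zero_mem (mem_column.mpr ((mem_column.mp hk).trans_le (hα k)))⟩

/-- The exponents on the `s_i`-string between `d` and `s_i d`. -/
def swapSegment (i : ℕ) (d : ℕ →₀ ℕ) : Set (ℕ →₀ ℕ) :=
  {e | (∀ k, k ≠ i → k ≠ i + 1 → e k = d k) ∧ e i + e (i + 1) = d i + d (i + 1) ∧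
    min (d i) (d (i + 1)) ≤ e i ∧ min (d i) (d (i + 1)) ≤ e (i + 1)}

lemma content_apply_of_swapMems {N i k : ℕ} {C C' : ℕ → Finset ℕ}
    (hC : ∀ j < N, C' j = C j ∨ C' j = swapMems i (C j)) (hk : k ≠ i) (hk' : k ≠ i + 1) :
    content N C' k = content N C k := by
  simp only [content_apply]
  congr 1
  refine filter_congr fun j hj => ?_
  rcases hC j (mem_range.mp hj) with h | h
  · rw [h]
  · rw [h, mem_swapMems_of_ne hk hk']

lemma content_add_content_of_swapMems {N i : ℕ} {C C' : ℕ → Finset ℕ}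
    (hC : ∀ j < N, C' j = C j ∨ C' j = swapMems i (C j)) :
    content N C' i + content N C' (i + 1) = content N C i + content N C (i + 1) := by
  simp only [content_apply_eq_sum, ← sum_add_distrib]
  refine sum_congr rfl fun j hj => ?_
  rcases hC j (mem_range.mp hj) with h | h
  · rw [h]
  · rw [h, if_congr left_mem_swapMems rfl rfl, if_congr right_mem_swapMems rfl rfl, add_comm]

lemma mem_columnContents_of_mem_swapSegment {N i : ℕ} {α d e : ℕ →₀ ℕ} (hα : α i ≤ α (i + 1))
    (hd : d ∈ columnContents N α) (he : e ∈ swapSegment i d) : e ∈ columnContents N α := by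
  classical
  obtain ⟨C, hC, rfl⟩ := hd
  obtain ⟨hne, hsum, hi, hi'⟩ := he
  let A : Finset ℕ := {j ∈ range N | i ∈ C j}
  let B : Finset ℕ := {j ∈ range N | i + 1 ∈ C j}
  have hA : content N C i = #A := content_apply N C i
  have hB : content N C (i + 1) = #B := content_apply N C (i + 1)
  have hcard := card_union_add_card_inter A B
  have hinter : #(A ∩ B) ≤ min #A #B := le_min (card_le_card inter_subset_left)
    (card_le_card inter_subset_right)
  obtain ⟨T, hT, hT', hTe⟩ : ∃ T, A ∩ B ⊆ T ∧ T ⊆ A ∪ B ∧ #T = e i :=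
    exists_subsuperset_card_eq (inter_subset_left.trans subset_union_left) (by lia) (by lia)
  set C' : ℕ → Finset ℕ := fun j => if j ∈ T ↔ i ∈ C j then C j else swapMems i (C j) with hC'
  have hCC' (j : ℕ) (_ : j < N) : C' j = C j ∨ C' j = swapMems i (C j) := by grind
  have hi : content N C' i = e i := by
    rw [content_apply, ← hTe]
    congr 1
    ext j
    grind [left_mem_swapMems]
  refine ⟨C', fun j hj => ?_, ?_⟩
  · rcases hCC' j hj with h | h <;> rw [h]
    · exact hC j hj
    · exact (hC j hj).swapMems_left fun h => mem_column.mpr ((mem_column.mp h).trans_le hα)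
  · ext k
    rcases eq_or_ne k i with rfl | hk
    · exact hi
    rcases eq_or_ne k (i + 1) with rfl | hk'
    · have := content_add_content_of_swapMems hCC'
      lia
    · rw [content_apply_of_swapMems hCC' hk hk', hne k hk hk']

lemma columnContents_swapEntries_subset {N i : ℕ} {α : ℕ →₀ ℕ} (hα : α i ≤ α (i + 1)) :
    columnContents N (swapEntries i α) ⊆ columnContents N α := by
  rintro _ ⟨C, hC, rfl⟩
  refine ⟨C, fun j hj => (hC j hj).trans ?_, rfl⟩
  rw [column_swapEntries]
  exact GaleLE.swapMems_self fun h => mem_column.mpr ((mem_column.mp h).trans_le hα)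

lemma exists_mem_swapSegment_of_mem_columnContents {N i : ℕ} {α e : ℕ →₀ ℕ}
    (hα : α i ≤ α (i + 1)) (he : e ∈ columnContents N α) :
    ∃ d ∈ columnContents N (swapEntries i α), e ∈ swapSegment i d := by
  obtain ⟨C, hC, rfl⟩ := he
  set C' : ℕ → Finset ℕ := fun j => if i ∈ C j then C j else swapMems i (C j)
  have hCC' (j : ℕ) (_ : j < N) : C' j = C j ∨ C' j = swapMems i (C j) := by grind
  refine ⟨content N C', ⟨C', fun j hj => ?_, rfl⟩, ?_⟩
  · rw [column_swapEntries]
    exact (hC j hj).swapMems_right fun h => mem_column.mpr ((mem_column.mp h).trans_le hα)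
  · have hsum := content_add_content_of_swapMems hCC'
    have hle (k : ℕ) (hk : k = i ∨ k = i + 1) : content N C k ≤ content N C' i := by
      simp only [content_apply]
      refine card_le_card fun j hj => ?_
      grind [left_mem_swapMems]
    have := hle i (.inl rfl)
    have := hle (i + 1) (.inr rfl)
    exact ⟨fun k hk hk' => (content_apply_of_swapMems hCC' hk hk').symm, hsum.symm, by lia, by lia⟩

lemma mem_columnContents_iff {N i : ℕ} {α e : ℕ →₀ ℕ} (hα : α i ≤ α (i + 1)) :
    e ∈ columnContents N α ↔ ∃ d ∈ columnContents N (swapEntries i α), e ∈ swapSegment i d :=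
  ⟨exists_mem_swapSegment_of_mem_columnContents hα, fun ⟨_, hd, he⟩ =>
    mem_columnContents_of_mem_swapSegment hα (columnContents_swapEntries_subset hα hd) he⟩

end Skyline

section Segments

lemma swapSegment_swapEntries (i : ℕ) (d : ℕ →₀ ℕ) :
    swapSegment i (swapEntries i d) = swapSegment i d := by
  ext e
  simp only [swapSegment, Set.mem_ofPred_eq, swapEntries_left, swapEntries_right]
  rw [add_comm (d (i + 1)), min_comm (d (i + 1))]
  refine and_congr_left fun _ => forall_congr' fun k => ?_
  exact forall_congr' fun hk => forall_congr' fun hk' => by rw [swapEntries_of_ne hk hk']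

lemma self_mem_swapSegment (i : ℕ) (d : ℕ →₀ ℕ) : d ∈ swapSegment i d :=
  ⟨fun _ _ _ => rfl, rfl, min_le_left _ _, min_le_right _ _⟩

lemma prepend_mem_swapSegment_iff {i p : ℕ} {d e : ℕ →₀ ℕ} {q : ℕ} :
    prepend q e ∈ swapSegment (i + 1) (prepend p d) ↔ q = p ∧ e ∈ swapSegment i d := by
  simp only [swapSegment, Set.mem_ofPred_eq, prepend_succ]
  constructor
  · rintro ⟨hne, h⟩
    refine ⟨by simpa using hne 0 (by lia) (by lia), fun k hk hk' => ?_, h⟩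
    simpa using hne (k + 1) (by lia) (by lia)
  · rintro ⟨rfl, hne, h⟩
    refine ⟨fun k hk hk' => ?_, h⟩
    cases k with
    | zero => simp
    | succ k => simpa using hne k (by lia) (by lia)

lemma mem_swapSegment_add_single_iff {i m : ℕ} {b e : ℕ →₀ ℕ} (hb : b i = b (i + 1)) :
    e ∈ swapSegment i (b + Finsupp.single i m) ↔
      ∃ p ∈ antidiagonal m, b + Finsupp.single i p.1 + Finsupp.single (i + 1) p.2 = e := by
  have hl (k l : ℕ) : (b + Finsupp.single i k + Finsupp.single (i + 1) l) i = b i + k := by simp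
  have hr (k l : ℕ) : (b + Finsupp.single i k + Finsupp.single (i + 1) l) (i + 1)
      = b (i + 1) + l := by simp
  have hne {j : ℕ} (hj : j ≠ i) (hj' : j ≠ i + 1) (k l : ℕ) :
      (b + Finsupp.single i k + Finsupp.single (i + 1) l) j = b j := by
    simp [Finsupp.single_eq_of_ne hj, Finsupp.single_eq_of_ne hj']
  have hm : b + Finsupp.single i m = b + Finsupp.single i m + Finsupp.single (i + 1) 0 := by
    rw [Finsupp.single_zero, add_zero]
  rw [hm]
  simp only [swapSegment, Set.mem_ofPred_eq, hl, hr]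
  constructor
  · rintro ⟨he, hsum, hi, hi'⟩
    refine ⟨(e i - b i, e (i + 1) - b (i + 1)), HasAntidiagonal.mem_antidiagonal.mpr (by lia), ?_⟩
    ext k
    rcases eq_or_ne k i with rfl | hk
    · rw [hl]
      lia
    rcases eq_or_ne k (i + 1) with rfl | hk'
    · rw [hr]
      lia
    · rw [hne hk hk', he k hk hk', hne hk hk']
  · rintro ⟨p, hp, rfl⟩
    rw [HasAntidiagonal.mem_antidiagonal] at hp
    rw [hl, hr]
    exact ⟨fun k hk hk' => by rw [hne hk hk', hne hk hk'], by lia, by lia, by lia⟩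

variable {R : Type*} [CommRing R]

lemma coeff_prepend_X_pow_mul_shift (p k : ℕ) (d : ℕ →₀ ℕ)
    (f : MvPolynomial ℕ R) :
    coeff (prepend p d) (X 0 ^ k * shift f) = if p = k then coeff d f else 0 := by
  classical
  induction f using MvPolynomial.induction_on' with
  | monomial γ z =>
    rw [X_pow_mul_shift_monomial, coeff_monomial, coeff_monomial]
    by_cases hpk : p = k
    · simp only [hpk, (prepend_injective k).eq_iff, if_true]
    · rw [if_neg hpk, if_neg fun h => hpk (by simpa using (DFunLike.congr_fun h 0).symm)]
  | add f g hf hg =>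
    rw [map_add, mul_add, coeff_add, hf, hg, coeff_add]
    split_ifs <;> simp

variable [IsDomain R]

lemma coeff_demazure_monomial {i : ℕ} {d : ℕ →₀ ℕ} (hd : d (i + 1) ≤ d i) (z : R)
    (e : ℕ →₀ ℕ) [Decidable (e ∈ swapSegment i d)] :
    coeff e (demazure i (monomial d z)) = if e ∈ swapSegment i d then z else 0 := by
  classical
  obtain ⟨b, m, hb, rfl⟩ := exists_eq_add_single hd
  have hb' : swapVars i (monomial b z) = monomial b z := by
    rw [swapVars_monomial, swapEntries_eq_self hb]
  have hmon (k l : ℕ) : X i ^ k * X (i + 1) ^ l * monomial b z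
      = monomial (b + Finsupp.single i k + Finsupp.single (i + 1) l) z := by
    rw [X_pow_eq_monomial, X_pow_eq_monomial, monomial_mul, monomial_mul, one_mul, one_mul,
      add_comm _ b, add_assoc]
  have hfactor : monomial (b + Finsupp.single i m) z = X i ^ m * monomial b z := by
    rw [X_pow_eq_monomial, monomial_mul, one_mul, add_comm]
  rw [hfactor, demazure_X_left_pow_mul_of_swapVars_eq hb']
  simp only [hmon, coeff_sum, coeff_monomial, mem_swapSegment_add_single_iff hb]
  split_ifs with he
  · obtain ⟨p, hp, rfl⟩ := he
    rw [sum_eq_single_of_mem p hp, if_pos rfl]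
    refine fun q _ hqp => if_neg fun h => hqp (Prod.ext ?_ ?_)
    · simpa using DFunLike.congr_fun h i
    · simpa using DFunLike.congr_fun h (i + 1)
  · exact sum_eq_zero fun p hp => if_neg fun h => he ⟨p, hp, h⟩

lemma demazure_add_demazure_swapVars (i : ℕ) (f : MvPolynomial ℕ R) :
    demazure i f + demazure i (swapVars i f) = f + swapVars i f := by
  rw [← map_add]
  exact demazure_of_swapVars_eq (by rw [map_add, swapVars_swapVars, add_comm])

lemma mem_swapSegment_of_coeff_demazure_monomial_ne_zero {i : ℕ} {d e : ℕ →₀ ℕ} {z : R}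
    (h : coeff e (demazure i (monomial d z)) ≠ 0) : e ∈ swapSegment i d := by
  classical
  rcases le_total (d (i + 1)) (d i) with hd | hd
  · rw [coeff_demazure_monomial hd] at h
    exact of_not_not fun he => h (if_neg he)
  · by_contra he
    have hswap := congrArg (coeff e) (demazure_add_demazure_swapVars i (monomial d z))
    rw [swapVars_monomial, coeff_add, coeff_add,
      coeff_demazure_monomial (d := swapEntries i d) (by simpa using hd), coeff_monomial,
      coeff_monomial, swapSegment_swapEntries, if_neg he, add_zero,
      if_neg (by rintro rfl; exact he (self_mem_swapSegment i _)), if_neg, add_zero] at hswap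
    · exact h hswap
    · rintro rfl
      exact he (swapSegment_swapEntries i d ▸ self_mem_swapSegment i _)

lemma exists_mem_swapSegment_of_coeff_demazure_ne_zero {i : ℕ} {f : MvPolynomial ℕ R}
    {e : ℕ →₀ ℕ} (h : coeff e (demazure i f) ≠ 0) :
    ∃ d, coeff d f ≠ 0 ∧ e ∈ swapSegment i d := by
  rw [as_sum f, map_sum, coeff_sum] at h
  obtain ⟨d, hd, hne⟩ := exists_ne_zero_of_sum_ne_zero h
  exact ⟨d, mem_support_iff.mp hd, mem_swapSegment_of_coeff_demazure_monomial_ne_zero hne⟩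

end Segments

section Positivity

variable {R : Type*} [CommRing R] [LinearOrder R] [IsStrictOrderedRing R]

variable (R) in
/-- The polynomials `f` such that `π_i f` has nonnegative coefficients, with positive ones all
along the `s_i`-strings that start in the support of `f`. -/
def segmentPositive (i : ℕ) : AddSubmonoid (MvPolynomial ℕ R) where
  carrier := {f | (∀ e, 0 ≤ coeff e (demazure i f)) ∧
    ∀ d, coeff d f ≠ 0 → ∀ e ∈ swapSegment i d, 0 < coeff e (demazure i f)}
  zero_mem' := ⟨fun e => by simp, fun d hd => absurd (coeff_zero d) hd⟩
  add_mem' := by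
    rintro f g ⟨hf, hf'⟩ ⟨hg, hg'⟩
    simp only [Set.mem_ofPred_eq, map_add, coeff_add]
    refine ⟨fun e => add_nonneg (hf e) (hg e), fun d hd e he => ?_⟩
    by_cases hfd : coeff d f = 0
    · exact add_pos_of_nonneg_of_pos (hf e) (hg' d (by simpa [hfd] using hd) e he)
    · exact add_pos_of_pos_of_nonneg (hf' d hfd e he) (hg e)

lemma monomial_mem_segmentPositive {i : ℕ} {d : ℕ →₀ ℕ} (hd : d (i + 1) ≤ d i) {z : R}
    (hz : 0 ≤ z) : monomial d z ∈ segmentPositive R i := by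
  classical
  refine ⟨fun e => ?_, fun d' hd' e he => ?_⟩
  · rw [coeff_demazure_monomial hd]
    split_ifs
    exacts [hz, le_rfl]
  · rw [coeff_monomial, ite_ne_right_iff] at hd'
    obtain ⟨rfl, hz'⟩ := hd'
    rw [coeff_demazure_monomial hd, if_pos he]
    exact hz.lt_of_ne hz'.symm

lemma X_pow_mul_shift_mem_segmentPositive {i : ℕ} {f : MvPolynomial ℕ R}
    (hf : f ∈ segmentPositive R i) (k : ℕ) : X 0 ^ k * shift f ∈ segmentPositive R (i + 1) := by
  refine ⟨fun e => ?_, fun d hd e he => ?_⟩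
  · obtain ⟨p, e, rfl⟩ := exists_eq_prepend e
    rw [demazure_succ_X_pow_mul_shift, coeff_prepend_X_pow_mul_shift]
    split_ifs
    exacts [hf.1 e, le_rfl]
  · obtain ⟨p, d, rfl⟩ := exists_eq_prepend d
    obtain ⟨q, e, rfl⟩ := exists_eq_prepend e
    obtain ⟨rfl, he'⟩ := prepend_mem_swapSegment_iff.mp he
    rw [coeff_prepend_X_pow_mul_shift, ite_ne_right_iff] at hd
    rw [demazure_succ_X_pow_mul_shift, coeff_prepend_X_pow_mul_shift, if_pos hd.1]
    exact hf.2 d hd.2 e he'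

/-- `κ_α` has nonnegative coefficients, and its support consists of the column contents of the
skyline diagram of `α`. -/
structure HasSkylineSupport (Key : (ℕ →₀ ℕ) → MvPolynomial ℕ R) (N : ℕ) (α : ℕ →₀ ℕ) : Prop where
  coeff_nonneg (d : ℕ →₀ ℕ) : 0 ≤ coeff d (Key α)
  coeff_ne_zero_iff (d : ℕ →₀ ℕ) : coeff d (Key α) ≠ 0 ↔ d ∈ columnContents N α

variable {Key : (ℕ →₀ ℕ) → MvPolynomial ℕ R}

namespace IsKeyFamily

lemma hasSkylineSupport_of_antitone (hKey : IsKeyFamily Key) {N : ℕ} {α : ℕ →₀ ℕ}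
    (hα : Antitone α) (hN : ∀ i, α i ≤ N) : HasSkylineSupport Key N α := by
  classical
  constructor <;> intro d <;> rw [hKey.of_antitone hα, coeff_monomial]
  · split_ifs
    exacts [zero_le_one, le_rfl]
  · rw [columnContents_of_antitone hα hN, Set.mem_singleton_iff, ite_ne_right_iff, eq_comm]
    exact and_iff_left one_ne_zero

lemma hasSkylineSupport_of_ascent (hKey : IsKeyFamily Key) {N i : ℕ} {α : ℕ →₀ ℕ}
    (hi : α i < α (i + 1)) (hs : HasSkylineSupport Key N (swapEntries i α))
    (hpos : Key (swapEntries i α) ∈ segmentPositive R i) : HasSkylineSupport Key N α := by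
  refine ⟨fun e => hKey.of_ascent hi ▸ hpos.1 e, fun e => ?_⟩
  rw [hKey.of_ascent hi, mem_columnContents_iff hi.le]
  simp only [← hs.coeff_ne_zero_iff]
  exact ⟨exists_mem_swapSegment_of_coeff_demazure_ne_zero,
    fun ⟨d, hd, he⟩ => (hpos.2 d hd e he).ne'⟩

lemma mem_segmentPositive (hKey : IsKeyFamily Key) {N i : ℕ} {β : ℕ →₀ ℕ}
    (hβ : HasSkylineSupport Key N β) (hs : HasSkylineSupport Key N (sortEntries i β)) :
    Key β ∈ segmentPositive R i := by
  refine ⟨fun e => hKey.demazure_eq i β ▸ hs.coeff_nonneg e, fun d hd e he => ?_⟩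
  rw [hKey.demazure_eq]
  refine (hs.coeff_nonneg e).lt_of_ne' ((hs.coeff_ne_zero_iff e).mpr ?_)
  rw [hβ.coeff_ne_zero_iff] at hd
  unfold sortEntries
  split_ifs with h
  · exact mem_columnContents_of_mem_swapSegment h hd he
  · exact (mem_columnContents_iff (by simpa using (not_le.mp h).le)).mpr
      ⟨d, (swapEntries_swapEntries i β).symm ▸ hd, he⟩

lemma mem_segmentPositive_succ (hKey : IsKeyFamily Key) {n N i : ℕ} (hi : i + 1 < n)
    (hn : ∀ γ ∈ box n N, HasSkylineSupport Key N γ) {β : ℕ →₀ ℕ} (hβ : β ∈ box (n + 1) N) :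
    Key β ∈ segmentPositive R (i + 1) := by
  have hcone : keyCone Key n N ≤ segmentPositive R i := by
    refine AddSubmonoid.closure_le.mpr ?_
    rintro _ ⟨γ, hγ, rfl⟩
    exact hKey.mem_segmentPositive (hn γ hγ) (hn _ (sortEntries_mem_box hγ hi))
  obtain ⟨p, β, rfl⟩ := exists_eq_prepend β
  obtain ⟨hp, hβ⟩ := prepend_mem_box_iff.mp hβ
  obtain ⟨K, hK⟩ := hKey.exists_isBranching hp hβ
  rw [hK.eq_firstVarSum]
  exact sum_mem fun k _ => X_pow_mul_shift_mem_segmentPositive (hcone (hK.mem_keyCone k)) k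

end IsKeyFamily

lemma HasSkylineSupport.mem_segmentPositive_zero {N : ℕ} {β : ℕ →₀ ℕ}
    (hβ : HasSkylineSupport Key N β) (hmax : ∀ i, β i ≤ β 0) : Key β ∈ segmentPositive R 0 := by
  rw [as_sum (Key β)]
  refine sum_mem fun d hd => monomial_mem_segmentPositive ?_ (hβ.coeff_nonneg d)
  exact apply_one_le_apply_zero_of_mem_columnContents hmax
    ((hβ.coeff_ne_zero_iff d).mp (mem_support_iff.mp hd))

lemma swapEntries_zero_apply_le_apply_zero {α : ℕ →₀ ℕ} (h : ∀ i, α (i + 2) ≤ α (i + 1))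
    (h₀ : α 0 ≤ α 1) (i : ℕ) : swapEntries 0 α i ≤ swapEntries 0 α 0 := by
  have hanti : Antitone fun i => α (i + 1) := antitone_nat_of_succ_le h
  rw [swapEntries_left]
  rcases i with _ | _ | i
  · rw [swapEntries_left]
  · rwa [swapEntries_right]
  · rw [swapEntries_of_ne (by lia) (by lia)]
    exact hanti (i + 1).zero_le

theorem IsKeyFamily.hasSkylineSupport (hKey : IsKeyFamily Key) {n N : ℕ} {α : ℕ →₀ ℕ}
    (hα : α ∈ box n N) : HasSkylineSupport Key N α := by
  induction n generalizing α with
  | zero =>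
    have hα₀ (i : ℕ) : α i = 0 := of_not_not fun h => absurd (hα.2 i h) i.not_lt_zero
    exact hKey.hasSkylineSupport_of_antitone (fun i j _ => by simp only [hα₀, le_rfl]) hα.1
  | succ n ih =>
    induction α using ascent_induction with
    | antitone α hanti => exact hKey.hasSkylineSupport_of_antitone hanti hα.1
    | ascent α hnanti ihα =>
      by_cases htail : ∃ i, α (i + 1) < α (i + 2)
      · obtain ⟨i, hi⟩ := htail
        have hin := succ_lt_of_mem_box hα hi
        have hs := swapEntries_mem_box hα hin
        exact hKey.hasSkylineSupport_of_ascent hi (ihα _ hi hs)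
          (hKey.mem_segmentPositive_succ (by lia) (fun γ hγ => ih hγ) hs)
      · push Not at htail
        obtain ⟨_ | i, hi⟩ := exists_ascent hnanti
        · have hs := ihα 0 hi (swapEntries_mem_box hα (succ_lt_of_mem_box hα hi))
          exact hKey.hasSkylineSupport_of_ascent hi hs
            (hs.mem_segmentPositive_zero (swapEntries_zero_apply_le_apply_zero htail hi.le))
        · exact absurd hi (htail i).not_gt

end Positivity

section Support

lemma filter_range_eq_column {n : ℕ} {α : ℕ →₀ ℕ} (hn : ∀ i, α i ≠ 0 → i < n) (j : ℕ) :
    {i ∈ range n | j + 1 ≤ α i} = column α j := by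
  ext i
  rw [mem_filter, mem_range, mem_column]
  exact and_iff_right_of_imp fun h => hn i (Nat.ne_zero_of_lt h)

lemma columnContents_eq {n : ℕ} {α : ℕ →₀ ℕ} (hn : ∀ i, α i ≠ 0 → i < n) (N : ℕ) :
    columnContents N α = {d | ∃ C : ℕ → Finset ℕ,
      (∀ j < N, C j ⊆ range n ∧ DomLE (C j) {i ∈ range n | j + 1 ≤ α i}) ∧
      ∀ i, d i = #{j ∈ range N | i ∈ C j}} := by
  have hcol (C : Finset ℕ) (j : ℕ) :
      C ⊆ range n ∧ DomLE C {i ∈ range n | j + 1 ≤ α i} ↔ GaleLE C (column α j) := by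
    rw [domLE_iff_galeLE, filter_range_eq_column hn]
    refine and_iff_right_of_imp fun h => h.subset_range ?_
    rw [← filter_range_eq_column hn]
    exact filter_subset _ _
  ext d
  simp only [columnContents, Set.mem_ofPred_eq, hcol, ← content_apply, eq_comm (a := content N _),
    DFunLike.ext_iff]

lemma apply_le_sup_support (α : ℕ →₀ ℕ) (i : ℕ) : α i ≤ α.support.sup α := by
  by_cases hi : α i = 0
  · exact hi.trans_le (Nat.zero_le _)
  · exact le_sup (Finsupp.mem_support_iff.mpr hi)

end Support

end KeyPolynomial

theorem stmt15_general {R : Type*} [CommRing R] [LinearOrder R] [IsStrictOrderedRing R]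
    {Key : (ℕ →₀ ℕ) → MvPolynomial ℕ R} (hKey : KeyPolynomial.IsKeyFamily Key) (α : ℕ →₀ ℕ)
    (n N : ℕ) (hn : ∀ i, α i ≠ 0 → i < n) (hN : ∀ i, α i ≤ N) :
    (↑(Key α).support : Set (ℕ →₀ ℕ)) =
      {d : ℕ →₀ ℕ | ∃ C : ℕ → Finset ℕ,
        (∀ j < N, C j ⊆ range n ∧ DomLE (C j) {i ∈ range n | j + 1 ≤ α i}) ∧
        ∀ i, d i = #{j ∈ range N | i ∈ C j}} := by
  rw [← KeyPolynomial.columnContents_eq hn]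
  ext d
  rw [mem_coe, mem_support_iff]
  exact (hKey.hasSkylineSupport ⟨hN, hn⟩).coeff_ne_zero_iff d

/-- The support of the key polynomial `κ_α` equals `{ξ^C : C_j ≤ D(α)_j for all j ∈ [n]}`,
where `D(α)_j = {i ≤ n : α_i ≥ j}` are the columns of the skyline diagram of `α`
(`0`-indexed below: column `j` is `{i < n : α_{i+1} ≥ j+1}`), and `ξ^C_i = #{j : i ∈ C_j}`. -/
theorem stmt15 (Key : (ℕ →₀ ℕ) → MvPolynomial ℕ ℤ)
    -- If `α` is weakly decreasing then `κ_α = x_1^{α_1} x_2^{α_2} ⋯` (variables are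
    -- `0`-indexed: the variable `X i` is `x_{i+1}` and `α i` is `α_{i+1}`).
    (hbase : ∀ α : ℕ →₀ ℕ, (∀ i j : ℕ, i ≤ j → α j ≤ α i) → Key α = monomial α 1)
    -- If `α i < α (i+1)` then `κ_α = ∂_i (x_i κ_α̂)` where `α̂` swaps entries `i`, `i+1`:
    -- `(xᵢ - xᵢ₊₁) ⬝ κ_α = xᵢ κ_α̂ - sᵢ ⬝ (xᵢ κ_α̂)`.
    (hrec : ∀ (α : ℕ →₀ ℕ) (i : ℕ), α i < α (i + 1) →
      (X i - X (i + 1)) * Key α =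
        X i * Key (Finsupp.equivMapDomain (Equiv.swap i (i + 1)) α) -
          rename (Equiv.swap i (i + 1))
            (X i * Key (Finsupp.equivMapDomain (Equiv.swap i (i + 1)) α)))
    (α : ℕ →₀ ℕ)
    -- `l = max{i : α_i ≠ 0}` (`1`-indexed), i.e. `l` is least with `α_i = 0` for all `i ≥ l`
    (l n : ℕ) (hl₁ : ∀ i, α i ≠ 0 → i < l) (hl₂ : ∀ m, (∀ i, α i ≠ 0 → i < m) → l ≤ m)
    -- `n = max{l, α_1, …, α_l}`
    (hn : n = max l (α.support.sup α))
    :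
    (↑(Key α).support : Set (ℕ →₀ ℕ)) =
      {d : ℕ →₀ ℕ | ∃ C : ℕ → Finset ℕ,
        (∀ j < n, C j ⊆ Finset.range n ∧
          DomLE (C j) ((Finset.range n).filter fun i => j + 1 ≤ α i)) ∧
        ∀ i, d i = ((Finset.range n).filter fun j => i ∈ C j).card} :=
  stmt15_general (.of_X_sub_X_mul_eq hbase hrec) α n n
    (fun i hi => (hl₁ i hi).trans_le (hn ▸ le_max_left _ _))
    fun i => (KeyPolynomial.apply_le_sup_support α i).trans (hn ▸ le_max_right _ _)
end
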